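/- Let k ≥ 4 be an integer, let H be a 2-contractible ℓ-overlapping k-tree with t edges and cross-cut number σ = σ(H), and let ε > 0. Then there exists a constant K > 0 such that for all sufficiently large n there is a collection 𝒞 of k-graphs on [n] with |𝒞| ≤ exp(K·(log n)²·C(n,k−1)/n^{k−ℓ−1}) such that every H-free k-graph I on [n] is contained in some C ∈ 𝒞, and every C ∈ 𝒞 satisfies |C| ≤ (σ − 1 + ε)·C(n,k−1). -/

import Mathlib

open Finset Filter

attribute [local instance] Classical.propDecidable

/-- The vertex set `[n] = {1,…,n}`. -/
def vtx (n : ℕ) : Finset ℕ := Finset.Icc 1 n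

/-- `F` is a `k`-graph on `[n]`: a family of `k`-element subsets of `[n]`. -/
def IsKGraphOn (k n : ℕ) (F : Finset (Finset ℕ)) : Prop :=
  ∀ E ∈ F, E ⊆ vtx n ∧ E.card = k

/-- The vertex set of a hypergraph (union of its edges). -/
def vertexSet {α : Type} [DecidableEq α] (H : Finset (Finset α)) : Finset α := H.sup id

/-- The degree of a vertex: the number of edges containing it. -/
def vdeg {α : Type} [DecidableEq α] (H : Finset (Finset α)) (v : α) : ℕ :=
  (H.filter fun E => v ∈ E).card

/-- Hypertrees, defined recursively: a single edge is a hypertree, and a hypertree grows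
by adding a new leaf edge `E` whose intersection with the current vertex set equals its
intersection with some existing (parent) edge `F`. -/
inductive IsHypertree {α : Type} [DecidableEq α] : Finset (Finset α) → Prop
  | single (E : Finset α) : IsHypertree {E}
  | grow {H : Finset (Finset α)} (E F : Finset α) (hH : IsHypertree H) (hE : E ∉ H)
      (hF : F ∈ H) (hint : E ∩ vertexSet H = E ∩ F) : IsHypertree (insert E H)

/-- A `k`-tree: a `k`-uniform hypertree. -/
def IsKTree {α : Type} [DecidableEq α] (k : ℕ) (H : Finset (Finset α)) : Prop :=
  IsHypertree H ∧ ∀ E ∈ H, E.card = k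

/-- A hypergraph is 2-contractible if every edge contains at least two vertices of degree 1. -/
def TwoContractible {α : Type} [DecidableEq α] (H : Finset (Finset α)) : Prop :=
  ∀ E ∈ H, 2 ≤ (E.filter fun v => vdeg H v = 1).card

/-- `S` is a cross-cut of `H`: every edge meets `S` in exactly one vertex. -/
def IsCrosscut {α : Type} [DecidableEq α] (H : Finset (Finset α)) (S : Finset α) : Prop :=
  ∀ E ∈ H, (E ∩ S).card = 1

/-- `σ` is the cross-cut number of `H`: the minimum size of a cross-cut. -/
def IsCrosscutNumber {α : Type} [DecidableEq α] (H : Finset (Finset α)) (σ : ℕ) : Prop :=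
  IsLeast {m | ∃ S : Finset α, IsCrosscut H S ∧ S.card = m} σ

/-- A hypergraph is `ℓ`-overlapping if any two distinct edges meet in at most `ℓ` vertices. -/
def Overlapping {α : Type} [DecidableEq α] (ℓ : ℕ) (H : Finset (Finset α)) : Prop :=
  ∀ E ∈ H, ∀ F ∈ H, E ≠ F → (E ∩ F).card ≤ ℓ

/-- `K` is (the edge set of) a copy of `H`, i.e. the image of `H` under a map that is
injective on the vertex set of `H`. -/
def IsCopyOf {α : Type} [DecidableEq α] (H : Finset (Finset α)) (K : Finset (Finset ℕ)) : Prop :=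
  ∃ φ : α → ℕ, Set.InjOn φ ↑(vertexSet H) ∧ K = H.image fun E => E.image φ

/-- `F` contains no subgraph isomorphic to `H`. -/
def HFree {α : Type} [DecidableEq α] (H : Finset (Finset α)) (F : Finset (Finset ℕ)) : Prop :=
  ∀ K ⊆ F, ¬ IsCopyOf H K

/-- The collection of copies of `H` in `F` (as distinct subgraphs of `F`). -/
noncomputable def copies {α : Type} [DecidableEq α] (H : Finset (Finset α))
    (F : Finset (Finset ℕ)) : Finset (Finset (Finset ℕ)) :=
  F.powerset.filter (IsCopyOf H)

/-- The number of `H`-free `k`-graphs on the vertex set `[n]`. -/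
noncomputable def forb {α : Type} [DecidableEq α] (n k : ℕ) (H : Finset (Finset α)) : ℕ :=
  (((vtx n).powersetCard k).powerset.filter (HFree H)).card

/-- `H` is a `k`-uniform linear cycle of length `ℓ`. -/
def IsLinearCycle {α : Type} [DecidableEq α] (k ℓ : ℕ) (H : Finset (Finset α)) : Prop :=
  ∃ E : ℕ → Finset α,
    (∀ i < ℓ, (E i).card = k) ∧
    (∀ i < ℓ, ∀ j < ℓ, i ≠ j → E i ≠ E j) ∧
    (∀ i < ℓ, (E i ∩ E ((i + 1) % ℓ)).card = 1) ∧
    (∀ i < ℓ, ∀ j < ℓ, i ≠ j → E i ∩ E ((i + 1) % ℓ) ≠ E j ∩ E ((j + 1) % ℓ)) ∧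
    (∀ i < ℓ, ∀ j < ℓ, i ≠ j → (i + 1) % ℓ ≠ j → (j + 1) % ℓ ≠ i → Disjoint (E i) (E j)) ∧
    H = (Finset.range ℓ).image E

/-- `(X 0, …, X (k-1))` is a `k`-partition of `F`. -/
def IsKPartition (k : ℕ) (F : Finset (Finset ℕ)) (X : Fin k → Finset ℕ) : Prop :=
  (∀ i j, i ≠ j → Disjoint (X i) (X j)) ∧ ∀ E ∈ F, ∀ i, (E ∩ X i).card = 1

/-- The `J`-projection of an edge. -/
def projJ {k : ℕ} (X : Fin k → Finset ℕ) (J : Finset (Fin k)) (E : Finset ℕ) : Finset ℕ :=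
  E ∩ J.sup X

/-- The pattern of a vertex set. -/
def pattern {k : ℕ} (X : Fin k → Finset ℕ) (D : Finset ℕ) : Finset (Fin k) :=
  Finset.univ.filter fun i => (D ∩ X i).Nonempty

/-- `MI(F)`: the patterns of intersections of pairs of distinct edges. -/
noncomputable def MI {k : ℕ} (F : Finset (Finset ℕ)) (X : Fin k → Finset ℕ) :
    Finset (Finset (Fin k)) :=
  ((F ×ˢ F).filter fun p => p.1 ≠ p.2).image fun p => pattern X (p.1 ∩ p.2)

/-- The link of a vertex set `D` in `F`. -/
def link {α : Type} [DecidableEq α] (F : Finset (Finset α)) (D : Finset α) :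
    Finset (Finset α) :=
  (F.filter fun E => D ⊆ E).image fun E => E \ D

/-- The degree of a vertex set `D` in `F`: the size of its link. -/
def setDeg {α : Type} [DecidableEq α] (F : Finset (Finset α)) (D : Finset α) : ℕ :=
  (link F D).card

/-- A nonempty hypergraph is `s`-diverse if every vertex has degree less than `|H|/s`. -/
def SDiverse {α : Type} [DecidableEq α] (s : ℕ) (H : Finset (Finset α)) : Prop :=
  H.Nonempty ∧ ∀ v : α, s * vdeg H v < H.card

/-- `D` is `s`-strong in `F` if its link is `s`-diverse. -/
def SStrong {α : Type} [DecidableEq α] (s : ℕ) (F : Finset (Finset α)) (D : Finset α) : Prop :=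
  SDiverse s (link F D)

/-- `F`, with `k`-partition `X`, is `s`-super-homogeneous: for every `J ∈ MI(F)` and every
edge `E ∈ F`, the projection `E_J` is `s`-strong and `d_F(E_J) ≥ max{s, |F|/(2k·n^|J|)}`. -/
def SuperHomogeneous (n k s : ℕ) (F : Finset (Finset ℕ)) (X : Fin k → Finset ℕ) : Prop :=
  ∀ J ∈ MI F X, ∀ E ∈ F,
    SStrong s F (projJ X J E) ∧
    s ≤ setDeg F (projJ X J E) ∧
    (F.card : ℝ) / (2 * k * (n : ℝ) ^ J.card) ≤ (setDeg F (projJ X J E) : ℝ)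

/-- The rank of a family of subsets of `[k]`: the minimum size of a set `D ⊆ [k]` contained
in no member of the family. -/
noncomputable def rankFam (k : ℕ) (𝒥 : Finset (Finset (Fin k))) : ℕ :=
  sInf {d | ∃ D : Finset (Fin k), D.card = d ∧ ∀ J ∈ 𝒥, ¬ D ⊆ J}

/-- A family of subsets of `[k]` is of type 1 if it contains the full power set of some
`(k-2)`-set `B`. -/
def TypeOne (k : ℕ) (𝒥 : Finset (Finset (Fin k))) : Prop :=
  ∃ B : Finset (Fin k), B.card = k - 2 ∧ ∀ S ⊆ B, S ∈ 𝒥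

/-- The constant `c(k,s) = k!/(k^k·(2s(1+2^k))^(2^k))`. -/
noncomputable def cks (k s : ℕ) : ℝ :=
  (Nat.factorial k : ℝ) / ((k : ℝ) ^ k * (2 * (s : ℝ) * (1 + 2 ^ k)) ^ (2 ^ k))

/-- Degree of a set of vertices in a (uniform) hypergraph `K`: number of edges containing it. -/
def uDeg {α : Type} [DecidableEq α] (K : Finset (Finset α)) (S : Finset α) : ℕ :=
  (K.filter fun e => S ⊆ e).card

/-- A `t`-uniform hypergraph is `d`-graded if `d_K(S) ≤ d^(t-|S|)` for all `S` with
`1 ≤ |S| ≤ t`. -/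
def Graded {α : Type} [DecidableEq α] (t : ℕ) (d : ℝ) (K : Finset (Finset α)) : Prop :=
  ∀ S : Finset α, 1 ≤ S.card → S.card ≤ t → (uDeg K S : ℝ) ≤ d ^ (t - S.card)

/-- `S` is saturated by `K`: `d_K(S) = ⌊d^(t-|S|)⌋`. -/
def Saturated {α : Type} [DecidableEq α] (t : ℕ) (d : ℝ) (K : Finset (Finset α))
    (S : Finset α) : Prop :=
  uDeg K S = ⌊d ^ (t - S.card)⌋₊

/-- `S` is admissible: no nonempty subset of `S` is saturated. -/
def Admissible {α : Type} [DecidableEq α] (t : ℕ) (d : ℝ) (K : Finset (Finset α))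
    (S : Finset α) : Prop :=
  ∀ S' ⊆ S, S'.Nonempty → ¬ Saturated t d K S'

/-- `Z_K(S)`: the vertices `v` such that `S ∪ {v}` is inadmissible and `{v}` is not
saturated. -/
noncomputable def Zset {α : Type} [DecidableEq α] (t : ℕ) (d : ℝ) (K : Finset (Finset α))
    (S : Finset α) : Finset α :=
  (vertexSet K).filter fun v => ¬ Admissible t d K (insert v S) ∧ ¬ Saturated t d K {v}

/-- `ex(G,H)`: the maximum number of edges of an `H`-free subgraph of `G`. -/
noncomputable def exIn {α : Type} [DecidableEq α] (H : Finset (Finset α))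
    (G : Finset (Finset ℕ)) : ℕ :=
  (G.powerset.filter (HFree H)).sup Finset.card

/-- The probability, in the random `k`-graph `G^(k)(n,p)` (each `k`-subset of `[n]` is an
edge independently with probability `p`), of the event `A`. -/
noncomputable def probEvent (k n : ℕ) (p : ℝ) (A : Finset (Finset ℕ) → Prop) : ℝ :=
  ∑ G ∈ ((vtx n).powersetCard k).powerset.filter A,
    p ^ G.card * (1 - p) ^ (((vtx n).powersetCard k).card - G.card)

/-!
An `H`-free `k`-graph `I ⊆ X` is caught by a bounded record. Call an edge `E` of `Y ⊆ X` rich if,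
for each small `Q ⊆ E`, no bounded set of vertices meets every edge of `Y` through `Q` outside `Q`.
If `Y` is nonempty and all its edges are rich, then `H` embeds greedily in `Y`. So from `I` one
can peel off edges one by one, at each step recording a small set `Q` together with vertices hitting
the remaining edges through `Q`. There are at most `exp (O (n ^ ℓ log n))` records, and a record
determines a container. 2-contractibility allows the sets `Q` to lie in a prescribed
`(k - 2)`-subset of each edge; a cross-cut `S` allows one to demand that the recorded sets have
fewer than `#S` vertices in a prescribed set `L` which meets each edge of `X` once.

Starting from all `k`-sets, one step leaves containers with `O (n ^ (k - 1))` edges. Thereafter let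
`G` have more than `(#S - 1 + ε) * n.choose (k - 1)` edges, and choose `s ≪ s'` such that few edges
have a facet of degree in `[s, s')`. The other edges with no facet of degree below `s`, or with at
least two, have containers smaller by a constant factor, as each edge of a container is then
determined by few data. The edges with exactly one light facet form stars, a positive proportion of
which have at least `#S` edges; after a random choice of `L` separating centres from kernels, a
container misses an edge of almost every such star. So `G` loses a constant multiple of
`n.choose (k - 1)` edges in each step, and boundedly many steps suffice.
-/

section Containers

variable {β : Type*} [DecidableEq β] {core : Finset β → Finset β} {𝒬 𝒯 X : Finset (Finset β)}

/-- A family `Y` of sets, each with a distinguished subset `core E`, is rich if whenever `Q ∈ 𝒬`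
lies in the core of a member of `Y` and `T ∈ 𝒯` is a set of forbidden vertices, `Q` lies in the core
of some `F ∈ Y` that avoids `T` outside `Q`. Rich families allow greedy embedding of trees. -/
def Rich (core : Finset β → Finset β) (𝒬 𝒯 Y : Finset (Finset β)) : Prop :=
  ∀ E ∈ Y, ∀ Q ∈ 𝒬, Q ⊆ core E → ∀ T ∈ 𝒯, ∃ F ∈ Y, Q ⊆ core F ∧ Disjoint T (F \ Q)

/-- The record `(T, r)` assigns to each `Q ∈ 𝒬` a set `T Q` and a rank `r Q`. It catches `E` if,
among the members of `𝒬` in the core of `E`, there is one of strictly smallest rank and its set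
meets `E` outside of it. -/
def Caught (core : Finset β → Finset β) (𝒬 : Finset (Finset β)) (T : Finset β → Finset β)
    (r : Finset β → ℕ) (E : Finset β) : Prop :=
  ∃ Q ∈ 𝒬, Q ⊆ core E ∧ ¬ Disjoint (T Q) (E \ Q) ∧
    ∀ Q' ∈ 𝒬, Q' ⊆ core E → Q' ≠ Q → r Q < r Q'

lemma Caught.congr {T T' : Finset β → Finset β} {r r' : Finset β → ℕ} {E : Finset β}
    (h : Caught core 𝒬 T r E) (hT : ∀ Q ∈ 𝒬, T' Q = T Q) (hr : ∀ Q ∈ 𝒬, r' Q = r Q) :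
    Caught core 𝒬 T' r' E := by
  obtain ⟨Q, hQ, hQE, hmeet, hmin⟩ := h
  refine ⟨Q, hQ, hQE, by rwa [hT Q hQ], fun Q' hQ' hQE' hne ↦ ?_⟩
  rw [hr Q hQ, hr Q' hQ']
  exact hmin Q' hQ' hQE' hne

/- Peel: a witness `(Q₀, T₀)` against richness gets rank `0` and catches every set whose core
contains `Q₀`; for the remaining sets `Q₀` is irrelevant and can be dropped from `𝒬`. -/
lemma exists_record_of_forall_not_rich (hT : ∅ ∈ 𝒯)
    (hX : ∀ Y ⊆ X, Y.Nonempty → ¬ Rich core 𝒬 𝒯 Y) :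
    ∃ (T : Finset β → Finset β) (r : Finset β → ℕ), (∀ Q, T Q ∈ 𝒯) ∧ (∀ Q ∈ 𝒬, r Q < #𝒬) ∧
      ∀ E ∈ X, Caught core 𝒬 T r E := by
  induction 𝒬 using Finset.strongInduction generalizing X with
  | H 𝒬 ih =>
    rcases X.eq_empty_or_nonempty with rfl | hne
    · exact ⟨fun _ ↦ ∅, fun _ ↦ 0, fun _ ↦ hT, fun Q hQ ↦ card_pos.2 ⟨Q, hQ⟩, by simp⟩
    have hnot := hX X Subset.rfl hne
    unfold Rich at hnot
    push Not at hnot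
    obtain ⟨-, -, Q₀, hQ₀, -, T₀, hT₀, hmeet⟩ := hnot
    obtain ⟨T, r, hTmem, hr, hcaught⟩ := ih (𝒬.erase Q₀) (erase_ssubset hQ₀)
      (X := {E ∈ X | ¬ Q₀ ⊆ core E}) fun Y hY hYne hrich ↦
        hX Y (hY.trans (filter_subset _ _)) hYne fun E hE Q hQ hQE ↦
          hrich E hE Q (mem_erase.2 ⟨fun h ↦ (mem_filter.1 (hY hE)).2 (h ▸ hQE), hQ⟩) hQE
    refine ⟨fun Q ↦ if Q = Q₀ then T₀ else T Q, fun Q ↦ if Q = Q₀ then 0 else r Q + 1,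
      fun Q ↦ ?_, fun Q hQ ↦ ?_, fun E hE ↦ ?_⟩
    · dsimp only
      split_ifs
      exacts [hT₀, hTmem Q]
    · dsimp only
      split_ifs with h
      · exact card_pos.2 ⟨Q, hQ⟩
      · have := hr Q (mem_erase.2 ⟨h, hQ⟩)
        rw [card_erase_of_mem hQ₀] at this
        omega
    · by_cases hQE : Q₀ ⊆ core E
      · refine ⟨Q₀, hQ₀, hQE, by simpa using hmeet E hE hQE, fun Q' _ _ hne' ↦ by simp [hne']⟩
      · obtain ⟨Q, hQ, hQcore, hTQ, hmin⟩ := hcaught E (mem_filter.2 ⟨hE, hQE⟩)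
        have hQne := ne_of_mem_erase hQ
        refine ⟨Q, mem_of_mem_erase hQ, hQcore, by simpa [hQne] using hTQ,
          fun Q' hQ' hQcore' h ↦ ?_⟩
        have hQne' : Q' ≠ Q₀ := fun h ↦ hQE (h ▸ hQcore')
        simpa [hQne, hQne'] using hmin Q' (mem_erase.2 ⟨hQne', hQ'⟩) hQcore' h

theorem exists_containers_of_records (hT : ∅ ∈ 𝒯) (core : Finset β → Finset β)
    (𝒬 X : Finset (Finset β)) :
    ∃ 𝒞 : Finset (Finset (Finset β)), #𝒞 ≤ (#𝒯 * #𝒬) ^ #𝒬 ∧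
      (∀ C ∈ 𝒞, C ⊆ X ∧ ∃ (T : Finset β → Finset β) (r : Finset β → ℕ),
        (∀ Q, T Q ∈ 𝒯) ∧ ∀ E ∈ C, Caught core 𝒬 T r E) ∧
      ∀ I ⊆ X, (∀ Y ⊆ I, Y.Nonempty → ¬ Rich core 𝒬 𝒯 Y) → ∃ C ∈ 𝒞, I ⊆ C := by
  let records := Fintype.piFinset fun _ : 𝒬 ↦ 𝒯 ×ˢ range #𝒬
  let extend (ρ : 𝒬 → Finset β × ℕ) (Q : Finset β) : Finset β × ℕ :=
    if h : Q ∈ 𝒬 then ρ ⟨Q, h⟩ else (∅, 0)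
  let container (ρ : 𝒬 → Finset β × ℕ) : Finset (Finset β) :=
    {E ∈ X | Caught core 𝒬 (fun Q ↦ (extend ρ Q).1) (fun Q ↦ (extend ρ Q).2) E}
  refine ⟨records.image container, card_image_le.trans ?_, ?_, fun I hI hpoor ↦ ?_⟩
  · simp [records]
  · simp only [mem_image, forall_exists_index, and_imp]
    rintro _ ρ hρ rfl
    refine ⟨filter_subset _ _, _, _, fun Q ↦ ?_, fun E hE ↦ (mem_filter.1 hE).2⟩
    by_cases hQ : Q ∈ 𝒬
    · simpa [extend, hQ] using (mem_product.1 (Fintype.mem_piFinset.1 hρ ⟨Q, hQ⟩)).1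
    · simpa [extend, hQ] using hT
  · obtain ⟨T, r, hTmem, hr, hcaught⟩ := exists_record_of_forall_not_rich hT hpoor
    let ρ : 𝒬 → Finset β × ℕ := fun Q ↦ (T Q, r Q)
    have hρ : ρ ∈ records := Fintype.mem_piFinset.2 fun Q ↦
      mem_product.2 ⟨hTmem Q, mem_range.2 (hr Q Q.2)⟩
    have hextend : ∀ Q ∈ 𝒬, extend ρ Q = (T Q, r Q) := fun Q hQ ↦ dif_pos hQ
    refine ⟨container ρ, mem_image_of_mem _ hρ, fun E hE ↦ mem_filter.2 ⟨hI hE, ?_⟩⟩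
    exact (hcaught E hE).congr (fun Q hQ ↦ by rw [hextend Q hQ]) fun Q hQ ↦ by rw [hextend Q hQ]

end Containers

section SmallSubsets

variable {β : Type*}

/-- The subsets of `U` with at most `ℓ` elements. -/
def smallSubsets (U : Finset β) (ℓ : ℕ) : Finset (Finset β) := {Q ∈ U.powerset | #Q ≤ ℓ}

lemma mem_smallSubsets {U Q : Finset β} {ℓ : ℕ} : Q ∈ smallSubsets U ℓ ↔ Q ⊆ U ∧ #Q ≤ ℓ := by
  simp [smallSubsets]

lemma empty_mem_smallSubsets (U : Finset β) (ℓ : ℕ) : ∅ ∈ smallSubsets U ℓ := by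
  simp [smallSubsets]

lemma card_smallSubsets_le (U : Finset β) (ℓ : ℕ) :
    #(smallSubsets U ℓ) ≤ (#U + 1) ^ ℓ := by
  have hcover : smallSubsets U ℓ ⊆ (range (ℓ + 1)).biUnion fun i ↦ U.powersetCard i := by
    intro Q hQ
    simpa [mem_powersetCard, Nat.lt_succ_iff] using (mem_smallSubsets.1 hQ).symm
  calc #(smallSubsets U ℓ) ≤ ∑ i ∈ range (ℓ + 1), #(U.powersetCard i) :=
        (card_le_card hcover).trans card_biUnion_le
    _ ≤ ∑ i ∈ range (ℓ + 1), #U ^ i * 1 ^ (ℓ - i) * ℓ.choose i := by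
        refine sum_le_sum fun i hi ↦ ?_
        rw [card_powersetCard, one_pow, mul_one]
        exact (Nat.choose_le_pow _ _).trans
          (Nat.le_mul_of_pos_right _ (Nat.choose_pos (Nat.lt_succ_iff.1 (mem_range.1 hi))))
    _ = (#U + 1) ^ ℓ := (add_pow _ _ _).symm

end SmallSubsets

section Embedding

variable {α : Type} [DecidableEq α] {β : Type*} [DecidableEq β] {H : Finset (Finset α)}

lemma mem_vertexSet {v : α} : v ∈ vertexSet H ↔ ∃ F ∈ H, v ∈ F := by
  simp [vertexSet]

lemma subset_vertexSet {F : Finset α} (hF : F ∈ H) : F ⊆ vertexSet H :=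
  le_sup (f := id) hF

lemma vertexSet_mono {H' : Finset (Finset α)} (h : H' ⊆ H) : vertexSet H' ⊆ vertexSet H :=
  sup_mono h

lemma vertexSet_insert (E : Finset α) : vertexSet (insert E H) = vertexSet H ∪ E := by
  rw [vertexSet, sup_insert, id, union_comm]
  rfl

lemma vdeg_ne_one_of_mem_of_mem {E F : Finset α} {v : α} (hE : E ∈ H) (hF : F ∈ H) (hne : E ≠ F)
    (hvE : v ∈ E) (hvF : v ∈ F) : vdeg H v ≠ 1 := by
  have : 1 < vdeg H v := one_lt_card.2
    ⟨E, mem_filter.2 ⟨hE, hvE⟩, F, mem_filter.2 ⟨hF, hvF⟩, hne⟩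
  exact this.ne'

lemma IsHypertree.nonempty (h : IsHypertree H) : H.Nonempty := by
  cases h with
  | single E => exact singleton_nonempty E
  | grow E F => exact insert_nonempty E _

lemma exists_injOn_extension {V E : Finset α} {E' : Finset β} {φ : α → β}
    (hφ : Set.InjOn φ V) (hcard : #E = #E') (htrace : E' ∩ V.image φ = (E ∩ V).image φ) :
    ∃ ψ : α → β, Set.EqOn ψ φ V ∧ Set.InjOn ψ ↑(V ∪ E) ∧ E.image ψ = E' := by
  have hnew : #(E \ V) = #(E' \ V.image φ) := by
    have h₁ := card_inter_add_card_sdiff E V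
    have h₂ := card_inter_add_card_sdiff E' (V.image φ)
    rw [htrace, card_image_of_injOn (hφ.mono (coe_subset.2 inter_subset_right))] at h₂
    omega
  let e := equivOfCardEq hnew
  let ψ (x : α) : β := if h : x ∈ E \ V then e ⟨x, h⟩ else φ x
  have hold : Set.EqOn ψ φ V := fun x hx ↦ dif_neg fun h ↦ (Finset.mem_sdiff.1 h).2 hx
  have hψ (x : α) (h : x ∈ E \ V) : ψ x = e ⟨x, h⟩ := dif_pos h
  have hmem (x : α) (h : x ∈ E \ V) : ψ x ∈ E' \ V.image φ := hψ x h ▸ (e ⟨x, h⟩).2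
  have himage : (E \ V).image ψ = E' \ V.image φ := by
    refine (image_subset_iff.2 hmem).antisymm fun z hz ↦ mem_image.2 ?_
    obtain ⟨x, hx⟩ := e.surjective ⟨z, hz⟩
    exact ⟨x, x.2, by rw [hψ x x.2, hx]⟩
  refine ⟨ψ, hold, ?_, ?_⟩
  · rw [← union_sdiff_self_eq_union, coe_union,
      Set.injOn_union (disjoint_coe.2 disjoint_sdiff)]
    refine ⟨hold.injOn_iff.2 hφ, fun x hx y hy hxy ↦ ?_, fun x hx y hy hxy ↦ ?_⟩
    · rw [hψ x hx, hψ y hy] at hxy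
      exact congrArg Subtype.val (e.injective (Subtype.ext hxy))
    · exact (Finset.mem_sdiff.1 (hmem y hy)).2 (hxy ▸ hold hx ▸ mem_image_of_mem φ hx)
  · have hEV : (E ∩ V).image ψ = E' ∩ V.image φ :=
      (image_congr (hold.mono (coe_subset.2 inter_subset_right))).trans htrace.symm
    rw [← sdiff_union_inter E V, image_union, himage, hEV, sdiff_union_inter]

lemma exists_injOn_extension_of_marked {V E W : Finset α} {E' Z : Finset β} {φ : α → β}
    (hφ : Set.InjOn φ V) (hW : W ⊆ E) (hZ : Z ⊆ E') (hE : #E = #E') (hWZ : #W = #Z)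
    (htraceE : E' ∩ V.image φ = (E ∩ V).image φ) (htraceW : Z ∩ V.image φ = (W ∩ V).image φ) :
    ∃ ψ : α → β, Set.EqOn ψ φ V ∧ Set.InjOn ψ ↑(V ∪ E) ∧ E.image ψ = E' ∧ W.image ψ = Z := by
  obtain ⟨φ₁, hφ₁, hinj₁, himage₁⟩ := exists_injOn_extension hφ hWZ htraceW
  have hV : V.image φ₁ = V.image φ := image_congr hφ₁
  have hEV : (E ∩ V).image φ₁ = (E ∩ V).image φ :=
    image_congr (hφ₁.mono (coe_subset.2 inter_subset_right))
  obtain ⟨ψ, hψ, hinj, himage⟩ := exists_injOn_extension (E := E) hinj₁ hE (by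
    rw [image_union, himage₁, hV, inter_union_distrib_left, htraceE, inter_eq_right.2 hZ,
      inter_union_distrib_left, inter_eq_right.2 hW, image_union, hEV, himage₁])
  refine ⟨ψ, (hψ.mono (coe_subset.2 subset_union_left)).trans hφ₁, ?_, himage, ?_⟩
  · exact hinj.mono (coe_subset.2 (union_subset_union_left subset_union_left))
  · rw [← himage₁]
    exact image_congr (hψ.mono (coe_subset.2 subset_union_right))

/-- `φ` embeds the hypergraph `H` into `Y` so that the marked vertices `W F` of each edge `F` go to
the marked vertices of its image, given by `Z`. -/
structure IsMarkedEmbedding (W : Finset α → Finset α) (Z : Finset β → Finset β)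
    (H : Finset (Finset α)) (Y : Finset (Finset β)) (φ : α → β) : Prop where
  injOn : Set.InjOn φ (vertexSet H)
  image_mem : ∀ F ∈ H, F.image φ ∈ Y
  image_mark : ∀ F ∈ H, (W F).image φ = Z (F.image φ)

/-- `H` has a copy in `Y`. -/
def Embeds (H : Finset (Finset α)) (Y : Finset (Finset β)) : Prop :=
  ∃ φ : α → β, Set.InjOn φ (vertexSet H) ∧ ∀ F ∈ H, F.image φ ∈ Y

variable {W : Finset α → Finset α} {Z : Finset β → Finset β} {Y : Finset (Finset β)} {φ : α → β}

lemma IsMarkedEmbedding.embeds (h : IsMarkedEmbedding W Z H Y φ) : Embeds H Y :=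
  ⟨φ, h.injOn, h.image_mem⟩

lemma IsMarkedEmbedding.image_vertexSet_subset {U : Finset β} (h : IsMarkedEmbedding W Z H Y φ)
    (hU : ∀ E ∈ Y, E ⊆ U) : (vertexSet H).image φ ⊆ U := by
  simp only [image_subset_iff, mem_vertexSet]
  rintro v ⟨F, hF, hv⟩
  exact hU _ (h.image_mem F hF) (mem_image_of_mem φ hv)

lemma IsMarkedEmbedding.apply_mem_iff {F : Finset α} {v : α} (h : IsMarkedEmbedding W Z H Y φ)
    (hW : W F ⊆ F) (hF : F ∈ H) (hv : v ∈ F) : φ v ∈ Z (F.image φ) ↔ v ∈ W F := by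
  rw [← h.image_mark F hF, ← mem_coe, coe_image, h.injOn.mem_image_iff
    (coe_subset.2 (hW.trans (subset_vertexSet hF))) (subset_vertexSet hF hv), mem_coe]

lemma IsMarkedEmbedding.exists_insert {E : Finset α} {E' : Finset β}
    (h : IsMarkedEmbedding W Z H Y φ) (hWH : ∀ F ∈ H, W F ⊆ F) (hE' : E' ∈ Y) (hW : W E ⊆ E)
    (hZ : Z E' ⊆ E') (hE : #E = #E') (hWZ : #(W E) = #(Z E'))
    (htraceE : E' ∩ (vertexSet H).image φ = (E ∩ vertexSet H).image φ)
    (htraceW : Z E' ∩ (vertexSet H).image φ = (W E ∩ vertexSet H).image φ) :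
    ∃ ψ, IsMarkedEmbedding W Z (insert E H) Y ψ := by
  obtain ⟨ψ, hψ, hinj, himage, hmark⟩ :=
    exists_injOn_extension_of_marked h.injOn hW hZ hE hWZ htraceE htraceW
  have hold {F A : Finset α} (hF : F ∈ H) (hA : A ⊆ F) : A.image ψ = A.image φ :=
    image_congr (hψ.mono (coe_subset.2 (hA.trans (subset_vertexSet hF))))
  refine ⟨ψ, by rwa [vertexSet_insert], (forall_mem_insert _ _ _).2 ⟨himage ▸ hE', fun F hF ↦ ?_⟩,
    (forall_mem_insert _ _ _).2 ⟨by rw [himage, hmark], fun F hF ↦ ?_⟩⟩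
  · exact hold hF Subset.rfl ▸ h.image_mem F hF
  · rw [hold hF Subset.rfl, hold hF (hWH F hF), h.image_mark F hF]

lemma exists_isMarkedEmbedding [Nonempty β] (hH : IsHypertree H) (hY : Y.Nonempty)
    (hW : ∀ E ∈ H, W E ⊆ E) (hZ : ∀ E' ∈ Y, Z E' ⊆ E')
    (hcard : ∀ E ∈ H, ∀ E' ∈ Y, #E = #E' ∧ #(W E) = #(Z E'))
    (hext : ∀ H₁ ⊆ H, ∀ E ∈ H, ∀ F ∈ H₁, E ∉ H₁ → E ∩ vertexSet H₁ = E ∩ F →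
      ∀ φ, IsMarkedEmbedding W Z H₁ Y φ → ∃ E' ∈ Y,
        E' ∩ (vertexSet H₁).image φ = (E ∩ F).image φ ∧
        Z E' ∩ (vertexSet H₁).image φ = (W E ∩ F).image φ) :
    ∃ φ, IsMarkedEmbedding W Z H Y φ := by
  obtain ⟨E₀, hE₀⟩ := hY
  induction hH with
  | single E =>
    obtain ⟨hE, hWZ⟩ := hcard E (mem_singleton_self E) E₀ hE₀
    have hempty : IsMarkedEmbedding W Z ∅ Y fun _ ↦ Classical.arbitrary β :=
      ⟨by simp [vertexSet], by simp, by simp⟩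
    rw [← insert_empty_eq]
    exact hempty.exists_insert (by simp) hE₀ (hW E (mem_singleton_self E)) (hZ E₀ hE₀) hE hWZ
      (by simp [vertexSet]) (by simp [vertexSet])
  | @grow H₁ E F _ hE hF htrace ih =>
    have hsub : H₁ ⊆ insert E H₁ := subset_insert E H₁
    have hEH : E ∈ insert E H₁ := mem_insert_self E H₁
    obtain ⟨φ, hφ⟩ := ih (fun F hF ↦ hW F (hsub hF)) (fun F hF ↦ hcard F (hsub hF))
      fun H₂ hH₂ E hE ↦ hext H₂ (hH₂.trans hsub) E (hsub hE)
    obtain ⟨E', hE', htraceE, htraceW⟩ := hext H₁ hsub E hEH F hF hE htrace φ hφ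
    have hWtrace : W E ∩ vertexSet H₁ = W E ∩ F := by
      rw [← inter_eq_left.2 (hW E hEH), inter_assoc, htrace, ← inter_assoc]
    obtain ⟨hcardE, hcardW⟩ := hcard E hEH E' hE'
    exact hφ.exists_insert (fun F hF ↦ hW F (hsub hF)) hE' (hW E hEH) (hZ E' hE') hcardE hcardW
      (htrace ▸ htraceE) (hWtrace ▸ htraceW)

end Embedding

section RichEmbedding

variable {α : Type} [DecidableEq α] {β : Type*} [DecidableEq β] {k ℓ q : ℕ}
  {H : Finset (Finset α)} {U : Finset β} {Y : Finset (Finset β)}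

lemma inter_eq_of_disjoint_sdiff {A E Q : Finset β} (hQA : Q ⊆ A) (hQE : Q ⊆ E)
    (h : Disjoint A (E \ Q)) : E ∩ A = Q := by
  refine Subset.antisymm (fun x hx ↦ ?_) (subset_inter hQE hQA)
  by_contra hxQ
  exact disjoint_left.1 h (mem_inter.1 hx).2 (Finset.mem_sdiff.2 ⟨(mem_inter.1 hx).1, hxQ⟩)

lemma Overlapping.card_image_inter_le {E F : Finset α} {φ : α → β} (h : Overlapping ℓ H)
    (hE : E ∈ H) (hF : F ∈ H) (hne : E ≠ F) : #((E ∩ F).image φ) ≤ ℓ :=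
  card_image_le.trans (h E hE F hF hne)

lemma IsMarkedEmbedding.apply_mem_iff_of_crosscut {S : Finset α} {L : Finset β} {φ : α → β} {v : α}
    (h : IsMarkedEmbedding (· ∩ S) (· ∩ L) H Y φ) (hv : v ∈ vertexSet H) : φ v ∈ L ↔ v ∈ S := by
  obtain ⟨F, hF, hvF⟩ := mem_vertexSet.1 hv
  simpa [hvF, mem_image_of_mem φ hvF] using h.apply_mem_iff inter_subset_left hF hvF

lemma IsMarkedEmbedding.card_image_erase_inter_le {S : Finset α} {L : Finset β} {φ : α → β} {s : α}
    (h : IsMarkedEmbedding (· ∩ S) (· ∩ L) H Y φ) (hs : s ∈ S) :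
    #(((vertexSet H).erase s).image φ ∩ L) ≤ #S - 1 := by
  have hsub : ((vertexSet H).erase s).image φ ∩ L ⊆ (S.erase s).image φ := by
    intro x hx
    obtain ⟨hx, hxL⟩ := mem_inter.1 hx
    obtain ⟨v, hv, rfl⟩ := mem_image.1 hx
    exact mem_image_of_mem φ (mem_erase.2 ⟨ne_of_mem_erase hv,
      (h.apply_mem_iff_of_crosscut (mem_of_mem_erase hv)).1 hxL⟩)
  exact (card_le_card hsub).trans (card_image_le.trans (card_erase_of_mem hs).le)

/- The two vertices of degree one in an edge of `H` are sent to the two vertices outside the core.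
Then the intersection of a new edge with its parent always lies in the core of the parent. -/
lemma Rich.embeds_of_twoContractible [Nonempty β] {core : Finset β → Finset β} (hH : IsKTree k H)
    (h2 : TwoContractible H) (hov : Overlapping ℓ H) (hne : Y.Nonempty)
    (hY : ∀ E ∈ Y, E ⊆ U ∧ #E = k) (hcore : ∀ E ∈ Y, core E ⊆ E ∧ #(core E) + 2 = k)
    (hrich : Rich core (smallSubsets U ℓ) (smallSubsets U #(vertexSet H)) Y) : Embeds H Y := by
  choose! W hWsub hWcard using fun E hE ↦ exists_subset_card_eq (h2 E hE)
  have hW {E : Finset α} (hE : E ∈ H) : W E ⊆ E := (hWsub E hE).trans (filter_subset _ _)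
  suffices ∃ φ, IsMarkedEmbedding W (fun E ↦ E \ core E) H Y φ by
    obtain ⟨φ, hφ⟩ := this
    exact hφ.embeds
  refine exists_isMarkedEmbedding hH.1 hne (fun E hE ↦ hW hE) (fun E' _ ↦ sdiff_subset)
    (fun E hE E' hE' ↦ ⟨by rw [hH.2 E hE, (hY E' hE').2], ?_⟩)
    fun H₁ hH₁ E hE F hF hEH₁ _ φ hφ ↦ ?_
  · rw [hWcard E hE, card_sdiff_of_subset (hcore E' hE').1, (hY E' hE').2, ← (hcore E' hE').2]
    omega
  have hEF : E ≠ F := fun h ↦ hEH₁ (h ▸ hF)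
  have hdeg {v : α} (hvE : v ∈ E) (hvF : v ∈ F) : vdeg H v ≠ 1 :=
    vdeg_ne_one_of_mem_of_mem hE (hH₁ hF) hEF hvE hvF
  have hQcore : (E ∩ F).image φ ⊆ core (F.image φ) := by
    refine image_subset_iff.2 fun v hv ↦ ?_
    obtain ⟨hvE, hvF⟩ := mem_inter.1 hv
    by_contra hvcore
    have hvW := (hφ.apply_mem_iff (hW (hH₁ hF)) hF hvF).1
      (Finset.mem_sdiff.2 ⟨mem_image_of_mem φ hvF, hvcore⟩)
    exact hdeg hvE hvF (mem_filter.1 (hWsub F (hH₁ hF) hvW)).2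
  have hVU := hφ.image_vertexSet_subset fun E hE ↦ (hY E hE).1
  have hQV : (E ∩ F).image φ ⊆ (vertexSet H₁).image φ :=
    image_subset_image (inter_subset_right.trans (subset_vertexSet hF))
  obtain ⟨E', hE', hQE', hdisj⟩ := hrich _ (hφ.image_mem F hF) _
    (mem_smallSubsets.2 ⟨hQV.trans hVU, hov.card_image_inter_le hE (hH₁ hF) hEF⟩) hQcore
    ((vertexSet H₁).image φ) (mem_smallSubsets.2 ⟨hVU, card_image_le.trans
      (card_le_card (vertexSet_mono hH₁))⟩)
  have htraceE := inter_eq_of_disjoint_sdiff hQV (hQE'.trans (hcore E' hE').1) hdisj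
  have hWF : W E ∩ F = ∅ := by
    refine eq_empty_of_forall_notMem fun v hv ↦ ?_
    obtain ⟨hvW, hvF⟩ := mem_inter.1 hv
    exact hdeg (hW hE hvW) hvF (mem_filter.1 (hWsub E hE hvW)).2
  refine ⟨E', hE', htraceE, ?_⟩
  rw [sdiff_inter_right_comm, htraceE, hWF, image_empty, sdiff_eq_empty_iff_subset]
  exact hQE'

/- The vertex of each edge in the crosscut is sent to the vertex of the image in `L`. Only `#S - 1`
vertices of `L` have to be avoided when an edge is added: the vertex in `S` of this edge is either
new, or lies in the parent edge and hence need not be avoided. -/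
lemma Rich.embeds_of_isCrosscut [Nonempty β] {S : Finset α} {L : Finset β} (hH : IsKTree k H)
    (hov : Overlapping ℓ H) (hS : IsCrosscut H S) (hSq : #S ≤ q + 1) (hne : Y.Nonempty)
    (hY : ∀ E ∈ Y, E ⊆ U ∧ #E = k) (hL : ∀ E ∈ Y, #(E ∩ L) = 1)
    (hrich : Rich id (smallSubsets U ℓ) {T ∈ smallSubsets U #(vertexSet H) | #(T ∩ L) ≤ q} Y) :
    Embeds H Y := by
  suffices ∃ φ, IsMarkedEmbedding (· ∩ S) (· ∩ L) H Y φ by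
    obtain ⟨φ, hφ⟩ := this
    exact hφ.embeds
  refine exists_isMarkedEmbedding hH.1 hne (fun E _ ↦ inter_subset_left)
    (fun E' _ ↦ inter_subset_left)
    (fun E hE E' hE' ↦ ⟨by rw [hH.2 E hE, (hY E' hE').2], by rw [hS E hE, hL E' hE']⟩)
    fun H₁ hH₁ E hE F hF hEH₁ htrace φ hφ ↦ ?_
  have hEF : E ≠ F := fun h ↦ hEH₁ (h ▸ hF)
  obtain ⟨s, hs⟩ := card_eq_one.1 (hS E hE)
  have hsES : s ∈ E ∩ S := hs ▸ mem_singleton_self s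
  have hVU := hφ.image_vertexSet_subset fun E hE ↦ (hY E hE).1
  have hQV : (E ∩ F).image φ ⊆ (vertexSet H₁).image φ :=
    image_subset_image (inter_subset_right.trans (subset_vertexSet hF))
  let T := ((vertexSet H₁).erase s).image φ
  have hTV : T ⊆ (vertexSet H₁).image φ := image_subset_image (erase_subset _ _)
  have hTL : #(T ∩ L) ≤ q :=
    (hφ.card_image_erase_inter_le (mem_inter.1 hsES).2).trans (Nat.sub_le_iff_le_add.2 hSq)
  obtain ⟨E', hE', hQE', hdisj⟩ := hrich _ (hφ.image_mem F hF) _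
    (mem_smallSubsets.2 ⟨hQV.trans hVU, hov.card_image_inter_le hE (hH₁ hF) hEF⟩)
    (image_subset_image inter_subset_right) T (mem_filter.2 ⟨mem_smallSubsets.2 ⟨hTV.trans hVU,
      (card_le_card hTV).trans (card_image_le.trans (card_le_card (vertexSet_mono hH₁)))⟩, hTL⟩)
  have hVdisj : Disjoint ((vertexSet H₁).image φ) (E' \ (E ∩ F).image φ) := by
    refine disjoint_left.2 fun x hxV hxE' ↦ ?_
    obtain ⟨v, hv, rfl⟩ := mem_image.1 hxV
    rcases eq_or_ne v s with rfl | hvs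
    · exact (Finset.mem_sdiff.1 hxE').2
        (mem_image_of_mem φ (htrace ▸ mem_inter.2 ⟨(mem_inter.1 hsES).1, hv⟩))
    · exact disjoint_left.1 hdisj (mem_image_of_mem φ (mem_erase.2 ⟨hvs, hv⟩)) hxE'
  have htraceE : E' ∩ (vertexSet H₁).image φ = (E ∩ F).image φ :=
    inter_eq_of_disjoint_sdiff hQV hQE' hVdisj
  refine ⟨E', hE', htraceE, ?_⟩
  rw [inter_right_comm, htraceE, inter_right_comm, ← filter_mem_eq_inter, filter_image,
    ← filter_mem_eq_inter]
  congr 1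
  exact filter_congr fun v hv ↦
    hφ.apply_mem_iff_of_crosscut (subset_vertexSet hF (mem_inter.1 hv).2)

end RichEmbedding

section HasContainers

variable {α : Type} [DecidableEq α] {H : Finset (Finset α)} {G X : Finset (Finset ℕ)} {b b' : ℕ}
  {P P' : Finset (Finset ℕ) → Prop}

lemma HFree.mono {I J : Finset (Finset ℕ)} (h : HFree H I) (hJI : J ⊆ I) : HFree H J :=
  fun K hK ↦ h K (hK.trans hJI)

lemma HFree.not_embeds {I : Finset (Finset ℕ)} (h : HFree H I) : ¬ Embeds H I := by
  rintro ⟨φ, hinj, hmem⟩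
  exact h (H.image fun E ↦ E.image φ) (image_subset_iff.2 hmem) ⟨φ, hinj, rfl⟩

lemma Embeds.mono {β : Type*} [DecidableEq β] {Y Y' : Finset (Finset β)} (h : Embeds H Y)
    (hY : Y ⊆ Y') : Embeds H Y' := by
  obtain ⟨φ, hinj, hmem⟩ := h
  exact ⟨φ, hinj, fun F hF ↦ hY (hmem F hF)⟩

/-- The `H`-free subfamilies of `G` have at most `b` containers, subfamilies of `G` satisfying
`P`. -/
def HasContainers (H : Finset (Finset α)) (G : Finset (Finset ℕ)) (b : ℕ)
    (P : Finset (Finset ℕ) → Prop) : Prop :=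
  ∃ 𝒞 : Finset (Finset (Finset ℕ)), #𝒞 ≤ b ∧ (∀ C ∈ 𝒞, C ⊆ G ∧ P C) ∧
    ∀ I ⊆ G, HFree H I → ∃ C ∈ 𝒞, I ⊆ C

lemma HasContainers.mono (h : HasContainers H G b P) (hP : ∀ C ⊆ G, P C → P' C) :
    HasContainers H G b P' := by
  obtain ⟨𝒞, hcard, hmem, hcover⟩ := h
  exact ⟨𝒞, hcard, fun C hC ↦ ⟨(hmem C hC).1, hP C (hmem C hC).1 (hmem C hC).2⟩, hcover⟩

lemma HasContainers.self (hP : P G) (hb : 1 ≤ b) : HasContainers H G b P :=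
  ⟨{G}, by simpa, by simpa, fun I hI _ ↦ ⟨G, mem_singleton_self G, hI⟩⟩

lemma HasContainers.bind (h : HasContainers H G b P)
    (h' : ∀ C ⊆ G, P C → HasContainers H C b' P') : HasContainers H G (b * b') P' := by
  obtain ⟨𝒞, hcard, hmem, hcover⟩ := h
  choose! 𝒟 hcard' hmem' hcover' using fun C hC ↦ h' C (hmem C hC).1 (hmem C hC).2
  refine ⟨𝒞.biUnion 𝒟, ?_, ?_, fun I hI hfree ↦ ?_⟩
  · exact (card_biUnion_le_card_mul _ _ _ hcard').trans (Nat.mul_le_mul_right b' hcard)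
  · simp only [mem_biUnion, forall_exists_index, and_imp]
    exact fun D C hC hD ↦ ⟨(hmem' C hC D hD).1.trans (hmem C hC).1, (hmem' C hC D hD).2⟩
  · obtain ⟨C, hC, hIC⟩ := hcover I hI hfree
    obtain ⟨D, hD, hID⟩ := hcover' C hC I hIC hfree
    exact ⟨D, mem_biUnion.2 ⟨C, hC, hD⟩, hID⟩

lemma HasContainers.extend {d e : ℕ} (h : HasContainers H X b fun C ↦ #C + d ≤ #X + e)
    (hXG : X ⊆ G) : HasContainers H G b fun C ↦ #C + d ≤ #G + e := by
  obtain ⟨𝒞, hcard, hmem, hcover⟩ := h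
  refine ⟨𝒞.image (G \ X ∪ ·), card_image_le.trans hcard, ?_, fun I hI hfree ↦ ?_⟩
  · simp only [mem_image, forall_exists_index, and_imp]
    rintro _ C hC rfl
    obtain ⟨hCX, hP⟩ := hmem C hC
    refine ⟨union_subset sdiff_subset (hCX.trans hXG), ?_⟩
    have hunion : #(G \ X ∪ C) ≤ #(G \ X) + #C := card_union_le _ _
    have hsdiff : #(G \ X) + #X = #G := card_sdiff_add_card_eq_card hXG
    omega
  · obtain ⟨C, hC, hIC⟩ := hcover (I ∩ X) inter_subset_right (hfree.mono inter_subset_left)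
    refine ⟨G \ X ∪ C, mem_image_of_mem _ hC, ?_⟩
    rw [← sdiff_union_inter I X]
    exact union_subset_union (sdiff_subset_sdiff hI Subset.rfl) hIC

/-- An upper bound for the number of records consisting of a set of at most `m` vertices and a rank
for each set of at most `ℓ` vertices of `[n]`. -/
def recordBound (n m ℓ : ℕ) : ℕ := ((n + 1) ^ (m + ℓ)) ^ (n + 1) ^ ℓ

lemma card_vtx (n : ℕ) : #(vtx n) = n := by simp [vtx]

lemma hasContainers_of_rich_embeds {n m ℓ : ℕ} {𝒯 : Finset (Finset ℕ)}
    (core : Finset ℕ → Finset ℕ) (hT : ∅ ∈ 𝒯) (hTm : 𝒯 ⊆ smallSubsets (vtx n) m)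
    (hrich : ∀ Y ⊆ X, Y.Nonempty → Rich core (smallSubsets (vtx n) ℓ) 𝒯 Y → Embeds H Y) :
    HasContainers H X (recordBound n m ℓ) fun C ↦ ∃ (T : Finset ℕ → Finset ℕ) (r : Finset ℕ → ℕ),
      (∀ Q, T Q ∈ 𝒯) ∧ ∀ E ∈ C, Caught core (smallSubsets (vtx n) ℓ) T r E := by
  obtain ⟨𝒞, hcard, hmem, hcover⟩ :=
    exists_containers_of_records hT core (smallSubsets (vtx n) ℓ) X
  refine ⟨𝒞, hcard.trans ?_, hmem, fun I hI hfree ↦ hcover I hI fun Y hYI hY hYrich ↦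
    hfree.not_embeds ((hrich Y (hYI.trans hI) hY hYrich).mono hYI)⟩
  have hsmall (j : ℕ) : #(smallSubsets (vtx n) j) ≤ (n + 1) ^ j := by
    simpa [card_vtx] using card_smallSubsets_le (vtx n) j
  calc (#𝒯 * #(smallSubsets (vtx n) ℓ)) ^ #(smallSubsets (vtx n) ℓ)
      ≤ ((n + 1) ^ m * (n + 1) ^ ℓ) ^ #(smallSubsets (vtx n) ℓ) :=
        Nat.pow_le_pow_left (Nat.mul_le_mul ((card_le_card hTm).trans (hsmall m)) (hsmall ℓ)) _
    _ ≤ recordBound n m ℓ := by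
        rw [← pow_add]
        exact Nat.pow_le_pow_right (by positivity) (hsmall ℓ)

/-- The vertices recorded by `T` for some subset of `Z`. -/
def recorded (T : Finset ℕ → Finset ℕ) (Z : Finset ℕ) : Finset ℕ := Z.powerset.biUnion T

lemma recorded_mono (T : Finset ℕ → Finset ℕ) {Z Z' : Finset ℕ} (h : Z ⊆ Z') :
    recorded T Z ⊆ recorded T Z' :=
  biUnion_subset_biUnion_of_subset_left T (powerset_mono.2 h)

lemma card_recorded_le {T : Finset ℕ → Finset ℕ} {m : ℕ} (hT : ∀ Q, #(T Q) ≤ m) (Z : Finset ℕ) :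
    #(recorded T Z) ≤ 2 ^ #Z * m :=
  (card_biUnion_le_card_mul _ _ _ fun Q _ ↦ hT Q).trans_eq (by rw [card_powerset])

variable {k n ℓ q : ℕ}

lemma hasContainers_of_twoContractible {core : Finset ℕ → Finset ℕ} (hH : IsKTree k H)
    (h2 : TwoContractible H) (hov : Overlapping ℓ H) (hX : IsKGraphOn k n X)
    (hcore : ∀ E ∈ X, core E ⊆ E ∧ #(core E) + 2 = k) :
    HasContainers H X (recordBound n #(vertexSet H) ℓ) fun C ↦ ∃ T : Finset ℕ → Finset ℕ,
      (∀ Q, #(T Q) ≤ #(vertexSet H)) ∧ ∀ E ∈ C, ∃ y ∈ E, y ∈ recorded T ((core E).erase y) := by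
  refine (hasContainers_of_rich_embeds core (empty_mem_smallSubsets _ _) Subset.rfl
    fun Y hY hne hrich ↦ hrich.embeds_of_twoContractible hH h2 hov hne (fun E hE ↦ hX E (hY hE))
      fun E hE ↦ hcore E (hY hE)).mono ?_
  rintro C - ⟨T, r, hT, hcaught⟩
  refine ⟨T, fun Q ↦ (mem_smallSubsets.1 (hT Q)).2, fun E hE ↦ ?_⟩
  obtain ⟨Q, -, hQ, hmeet, -⟩ := hcaught E hE
  obtain ⟨y, hyT, hyE⟩ := not_disjoint_iff.1 hmeet
  obtain ⟨hyE, hyQ⟩ := Finset.mem_sdiff.1 hyE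
  exact ⟨y, hyE, mem_biUnion.2 ⟨Q, mem_powerset.2 (subset_erase.2 ⟨hQ, hyQ⟩), hyT⟩⟩

lemma hasContainers_of_isCrosscut {S : Finset α} {L : Finset ℕ} (hH : IsKTree k H)
    (hov : Overlapping ℓ H) (hS : IsCrosscut H S) (hSq : #S ≤ q + 1) (hX : IsKGraphOn k n X)
    (hL : ∀ E ∈ X, #(E ∩ L) = 1) :
    HasContainers H X (recordBound n #(vertexSet H) ℓ) fun C ↦
      ∃ (T : Finset ℕ → Finset ℕ) (r : Finset ℕ → ℕ),
        (∀ Q, #(T Q) ≤ #(vertexSet H)) ∧ (∀ Q, #(T Q ∩ L) ≤ q) ∧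
        ∀ E ∈ C, Caught id (smallSubsets (vtx n) ℓ) T r E := by
  refine (hasContainers_of_rich_embeds id
    (𝒯 := {T ∈ smallSubsets (vtx n) #(vertexSet H) | #(T ∩ L) ≤ q})
    (mem_filter.2 ⟨empty_mem_smallSubsets _ _, by simp⟩) (filter_subset _ _)
    fun Y hY hne hrich ↦ hrich.embeds_of_isCrosscut hH hov hS hSq hne (fun E hE ↦ hX E (hY hE))
      fun E hE ↦ hL E (hY hE)).mono ?_
  rintro C - ⟨T, r, hT, hcaught⟩
  simp only [mem_filter, mem_smallSubsets] at hT
  exact ⟨T, r, fun Q ↦ (hT Q).1.2, fun Q ↦ (hT Q).2, hcaught⟩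

end HasContainers

section Facets

variable {α : Type} [DecidableEq α] {H : Finset (Finset α)} {X 𝒵 : Finset (Finset ℕ)}
  {T : Finset ℕ → Finset ℕ} {k n ℓ m s : ℕ}

lemma IsKTree.two_le (hH : IsKTree k H) (h2 : TwoContractible H) : 2 ≤ k := by
  obtain ⟨E, hE⟩ := hH.1.nonempty
  exact (h2 E hE).trans ((card_filter_le _ _).trans_eq (hH.2 E hE))

lemma card_sigma_recorded_le (hT : ∀ Q, #(T Q) ≤ m) (h𝒵 : ∀ Z ∈ 𝒵, #Z ≤ k) :
    #(𝒵.sigma (recorded T)) ≤ #𝒵 * (2 ^ k * m) := by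
  rw [card_sigma]
  refine sum_le_card_nsmul _ _ _ fun Z hZ ↦ (card_recorded_le hT Z).trans ?_
  exact Nat.mul_le_mul_right m (Nat.pow_le_pow_right two_pos (h𝒵 Z hZ))

lemma hasContainers_of_erase_mem (hH : IsKTree k H) (h2 : TwoContractible H)
    (hov : Overlapping ℓ H) (hX : IsKGraphOn k n X) (h𝒵 : ∀ Z ∈ 𝒵, #Z ≤ k)
    (hX𝒵 : ∀ E ∈ X, ∀ y ∈ E, E.erase y ∈ 𝒵) :
    HasContainers H X (recordBound n #(vertexSet H) ℓ) fun C ↦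
      #C ≤ #𝒵 * (2 ^ k * #(vertexSet H)) := by
  have hcore (E) (hE : E ∈ X) : ∃ B ⊆ E, #B + 2 = k := by
    obtain ⟨B, hBE, hB⟩ := exists_subset_card_eq ((Nat.sub_le k 2).trans_eq (hX E hE).2.symm)
    exact ⟨B, hBE, hB ▸ Nat.sub_add_cancel (hH.two_le h2)⟩
  choose! core hcore using hcore
  refine (hasContainers_of_twoContractible hH h2 hov hX hcore).mono ?_
  rintro C hCX ⟨T, hT, hC⟩
  choose! y hyE hy using hC
  refine le_trans (card_le_card_of_injOn (fun E ↦ ⟨E.erase (y E), y E⟩) (fun E hE ↦ ?_) ?_)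
    (card_sigma_recorded_le hT h𝒵)
  · exact mem_sigma.2 ⟨hX𝒵 E (hCX hE) _ (hyE E hE),
      recorded_mono T (erase_subset_erase _ (hcore E (hCX hE)).1) (hy E hE)⟩
  · intro E hE F hF hEF
    obtain ⟨herase, hyEF⟩ := Sigma.mk.inj hEF
    rw [← insert_erase (hyE E hE), ← insert_erase (hyE F hF), herase, eq_of_heq hyEF]

lemma card_le_of_mem_recorded_light_facet {C : Finset (Finset ℕ)} (hX : IsKGraphOn k n X)
    (hCX : C ⊆ X) (hT : ∀ Q, #(T Q) ≤ m)
    (hC : ∀ E ∈ C, ∃ y ∈ E, ∃ w ∈ E, w ≠ y ∧ uDeg X (E.erase w) < s ∧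
      y ∈ recorded T ((E.erase w).erase y)) :
    #C ≤ s * (n.choose (k - 2) * (2 ^ k * m)) := by
  choose! y hyE w hwE hwy hdeg hy using hC
  let f (E : Finset ℕ) : Σ _ : Finset ℕ, ℕ := ⟨(E.erase (w E)).erase (y E), y E⟩
  have hyw (E) (hE : E ∈ C) : y E ∈ E.erase (w E) := mem_erase.2 ⟨(hwy E hE).symm, hyE E hE⟩
  have hfiber : ∀ p ∈ C.image f, #{E ∈ C | f E = p} ≤ s := by
    simp only [mem_image, forall_exists_index, and_imp]
    rintro _ F hF rfl
    refine (card_le_card fun E hE ↦ ?_).trans (hdeg F hF).le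
    obtain ⟨hE, hEF⟩ := mem_filter.1 hE
    refine mem_filter.2 ⟨hCX hE, ?_⟩
    calc F.erase (w F) = insert (f F).2 (f F).1 := (insert_erase (hyw F hF)).symm
      _ = E.erase (w E) := by rw [← hEF]; exact insert_erase (hyw E hE)
      _ ⊆ E := erase_subset _ _
  have himage : C.image f ⊆ ((vtx n).powersetCard (k - 2)).sigma (recorded T) := by
    refine image_subset_iff.2 fun E hE ↦ mem_sigma.2 ⟨mem_powersetCard.2 ⟨?_, ?_⟩, hy E hE⟩
    · exact (erase_subset _ _).trans ((erase_subset _ _).trans (hX E (hCX hE)).1)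
    · rw [card_erase_of_mem (hyw E hE), card_erase_of_mem (hwE E hE), (hX E (hCX hE)).2]
      rfl
  calc #C ≤ s * #(C.image f) := card_le_mul_card_image C s hfiber
    _ ≤ s * (#((vtx n).powersetCard (k - 2)) * (2 ^ k * m)) :=
      Nat.mul_le_mul_left s <| (card_le_card himage).trans <| card_sigma_recorded_le hT
        fun Z hZ ↦ (mem_powersetCard.1 hZ).2.trans_le (Nat.sub_le k 2)
    _ = s * (n.choose (k - 2) * (2 ^ k * m)) := by rw [card_powersetCard, card_vtx]

lemma hasContainers_of_uDeg_erase_lt (hH : IsKTree k H) (h2 : TwoContractible H)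
    (hov : Overlapping ℓ H) (hX : IsKGraphOn k n X)
    (hs : ∀ E ∈ X, 1 < #{x ∈ E | uDeg X (E.erase x) < s}) :
    HasContainers H X (recordBound n #(vertexSet H) ℓ) fun C ↦
      #C ≤ s * (n.choose (k - 2) * (2 ^ k * #(vertexSet H))) := by
  simp only [one_lt_card, mem_filter] at hs
  choose! x hx x' hx' hne using hs
  refine (hasContainers_of_twoContractible (core := fun E ↦ (E.erase (x E)).erase (x' E))
    hH h2 hov hX fun E hE ↦ ⟨(erase_subset _ _).trans (erase_subset _ _), ?_⟩).mono ?_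
  · have hx'E := mem_erase.2 ⟨(hne E hE).symm, (hx' E hE).1⟩
    rw [← (hX E hE).2, ← card_erase_add_one (hx E hE).1, ← card_erase_add_one hx'E]
  rintro C hCX ⟨T, hT, hC⟩
  refine card_le_of_mem_recorded_light_facet hX hCX hT fun E hE ↦ ?_
  obtain ⟨y, hyE, hy⟩ := hC E hE
  obtain rfl | hyx := eq_or_ne (x E) y
  · exact ⟨x E, hyE, x' E, (hx' E (hCX hE)).1, (hne E (hCX hE)).symm, (hx' E (hCX hE)).2,
      recorded_mono T (erase_subset_erase _ (erase_subset_erase _ (erase_subset _ _))) hy⟩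
  · exact ⟨y, hyE, x E, (hx E (hCX hE)).1, hyx, (hx E (hCX hE)).2,
      recorded_mono T (erase_subset_erase _ (erase_subset _ _)) hy⟩

end Facets

section Stars

variable {α : Type} [DecidableEq α] {H : Finset (Finset α)} {X 𝓗 𝓓 : Finset (Finset ℕ)}
  {c T : Finset ℕ → Finset ℕ} {r : Finset ℕ → ℕ} {L : Finset ℕ} {k n ℓ m s q : ℕ}

/-- A system of stars in `X`: every kernel `D ∈ 𝓓` has `q + 1` centres `v ∈ c D`, which extend it
to edges `insert v D` of `X` whose facets other than `D` all lie in `𝓗`. -/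
structure IsStarSystem (X 𝓗 𝓓 : Finset (Finset ℕ)) (c : Finset ℕ → Finset ℕ) (q : ℕ) : Prop where
  card_centers : ∀ D ∈ 𝓓, #(c D) = q + 1
  notMem : ∀ D ∈ 𝓓, ∀ v ∈ c D, v ∉ D
  insert_mem : ∀ D ∈ 𝓓, ∀ v ∈ c D, insert v D ∈ X
  erase_mem : ∀ D ∈ 𝓓, ∀ v ∈ c D, ∀ y ∈ D, (insert v D).erase y ∈ 𝓗

lemma IsStarSystem.subset {𝓓' : Finset (Finset ℕ)} (h : IsStarSystem X 𝓗 𝓓 c q) (h𝓓 : 𝓓' ⊆ 𝓓) :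
    IsStarSystem X 𝓗 𝓓' c q :=
  ⟨fun D hD ↦ h.1 D (h𝓓 hD), fun D hD ↦ h.2 D (h𝓓 hD), fun D hD ↦ h.3 D (h𝓓 hD),
    fun D hD ↦ h.4 D (h𝓓 hD)⟩

lemma card_le_mul_add_mul_card_large_fibers {β γ : Type*} [DecidableEq γ] {A : Finset β}
    {B : Finset γ} {f : β → γ} (hf : ∀ a ∈ A, f a ∈ B)
    (hs : ∀ b ∈ B, #{a ∈ A | f a = b} ≤ s) (q : ℕ) :
    #A ≤ q * #B + s * #{b ∈ B | q < #{a ∈ A | f a = b}} := by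
  calc #A = ∑ b ∈ B, #{a ∈ A | f a = b} := card_eq_sum_card_fiberwise hf
    _ ≤ ∑ b ∈ B, (q + if q < #{a ∈ A | f a = b} then s else 0) := by
      refine sum_le_sum fun b hb ↦ ?_
      have := hs b hb
      split_ifs <;> omega
    _ = q * #B + s * #{b ∈ B | q < #{a ∈ A | f a = b}} := by
      rw [sum_add_distrib, sum_const, ← sum_filter, sum_const, smul_eq_mul, smul_eq_mul,
        mul_comm, mul_comm s]

lemma exists_isStarSystem (hX : IsKGraphOn k n X)
    (hs : ∀ E ∈ X, ∃ x ∈ E, uDeg X (E.erase x) < s ∧ ∀ y ∈ E.erase x, E.erase y ∈ 𝓗) (q : ℕ) :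
    ∃ 𝓓 ⊆ (vtx n).powersetCard (k - 1), ∃ c, IsStarSystem X 𝓗 𝓓 c q ∧
      #X ≤ q * n.choose (k - 1) + s * #𝓓 := by
  choose! x hxE hdeg hx using hs
  let star (D : Finset ℕ) : Finset (Finset ℕ) := {E ∈ X | E.erase (x E) = D}
  let 𝓓 : Finset (Finset ℕ) := {D ∈ (vtx n).powersetCard (k - 1) | q < #(star D)}
  have hinj (D) : Set.InjOn x (star D) := by
    intro E hE F hF hEF
    obtain ⟨hEX, hED⟩ := mem_filter.1 hE
    obtain ⟨hFX, hFD⟩ := mem_filter.1 hF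
    rw [← insert_erase (hxE E hEX), hED, ← hFD, hEF, insert_erase (hxE F hFX)]
  have hcenters : ∀ D ∈ 𝓓, ∃ B ⊆ (star D).image x, #B = q + 1 := fun D hD ↦
    exists_subset_card_eq ((mem_filter.1 hD).2.trans_eq (card_image_of_injOn (hinj D)).symm)
  choose! c hc hcard using hcenters
  have hedge : ∀ D ∈ 𝓓, ∀ v ∈ c D,
      v ∉ D ∧ insert v D ∈ X ∧ ∀ y ∈ D, (insert v D).erase y ∈ 𝓗 := by
    intro D hD v hv
    obtain ⟨E, hE, rfl⟩ := mem_image.1 (hc D hD hv)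
    obtain ⟨hEX, rfl⟩ := mem_filter.1 hE
    rw [insert_erase (hxE E hEX)]
    exact ⟨notMem_erase _ _, hEX, hx E hEX⟩
  refine ⟨𝓓, filter_subset _ _, c, ⟨hcard, fun D hD v hv ↦ (hedge D hD v hv).1,
    fun D hD v hv ↦ (hedge D hD v hv).2.1, fun D hD v hv ↦ (hedge D hD v hv).2.2⟩, ?_⟩
  rw [← card_vtx n, ← card_powersetCard]
  refine card_le_mul_add_mul_card_large_fibers (fun E hE ↦ mem_powersetCard.2
    ⟨(erase_subset _ _).trans (hX E hE).1, by rw [card_erase_of_mem (hxE E hE), (hX E hE).2]⟩)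
    (fun D _ ↦ ?_) q
  obtain h | ⟨E, hE⟩ := (star D).eq_empty_or_nonempty
  · exact (card_eq_zero.2 h).trans_le (Nat.zero_le s)
  obtain ⟨hEX, rfl⟩ := mem_filter.1 hE
  refine (card_le_card fun F hF ↦ ?_).trans (hdeg E hEX).le
  obtain ⟨hFX, hFE⟩ := mem_filter.1 hF
  exact mem_filter.2 ⟨hFX, hFE ▸ erase_subset _ _⟩

lemma card_filter_subset_disjoint {V D A : Finset ℕ} (hD : D ⊆ V) (hA : A ⊆ V)
    (hDA : Disjoint D A) : #{L ∈ V.powerset | A ⊆ L ∧ Disjoint D L} = 2 ^ (#V - #D - #A) := by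
  rw [← card_sdiff_of_subset hD, ← card_Icc_finset (subset_sdiff.2 ⟨hA, hDA.symm⟩)]
  congr 1
  ext L
  simp only [mem_filter, mem_powerset, mem_Icc, subset_sdiff, disjoint_comm (b := D)]
  tauto

lemma exists_separating {V : Finset ℕ} {a : ℕ} (h𝓓 : ∀ D ∈ 𝓓, D ⊆ V)
    (hc : ∀ D ∈ 𝓓, c D ⊆ V ∧ Disjoint D (c D)) (ha : ∀ D ∈ 𝓓, #D + #(c D) ≤ a) :
    ∃ L, #𝓓 ≤ 2 ^ a * #{D ∈ 𝓓 | c D ⊆ L ∧ Disjoint D L} := by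
  suffices ∃ L ∈ V.powerset, #𝓓 ≤ 2 ^ a * #{D ∈ 𝓓 | c D ⊆ L ∧ Disjoint D L} by
    obtain ⟨L, -, hL⟩ := this
    exact ⟨L, hL⟩
  refine exists_le_of_sum_le (powerset_nonempty V) ?_
  have hcount : ∀ D ∈ 𝓓, 2 ^ #V ≤ 2 ^ a * #{L ∈ V.powerset | c D ⊆ L ∧ Disjoint D L} := by
    intro D hD
    rw [card_filter_subset_disjoint (h𝓓 D hD) (hc D hD).1 (hc D hD).2, ← pow_add]
    have := ha D hD
    exact Nat.pow_le_pow_right two_pos (by omega)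
  calc ∑ _L ∈ V.powerset, #𝓓 = ∑ _D ∈ 𝓓, 2 ^ #V := by
        simp only [sum_const, card_powerset, smul_eq_mul, mul_comm]
    _ ≤ ∑ D ∈ 𝓓, 2 ^ a * #{L ∈ V.powerset | c D ⊆ L ∧ Disjoint D L} := sum_le_sum hcount
    _ = ∑ L ∈ V.powerset, 2 ^ a * #{D ∈ 𝓓 | c D ⊆ L ∧ Disjoint D L} := by
        rw [← mul_sum, ← mul_sum]
        congr 1
        exact sum_card_bipartiteAbove_eq_sum_card_bipartiteBelow fun D L ↦ c D ⊆ L ∧ Disjoint D L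

/-- The stars of the system are separated by `L`: centres lie in `L` and kernels avoid it. -/
def Separates (L : Finset ℕ) (𝓓 : Finset (Finset ℕ)) (c : Finset ℕ → Finset ℕ) : Prop :=
  ∀ D ∈ 𝓓, c D ⊆ L ∧ Disjoint D L

lemma Separates.insert_sdiff (hL : Separates L 𝓓 c) {D : Finset ℕ} {v : ℕ} (hD : D ∈ 𝓓)
    (hv : v ∈ c D) : insert v D \ L = D := by
  rw [insert_sdiff_of_mem _ ((hL D hD).1 hv), sdiff_eq_self_of_disjoint (hL D hD).2]

lemma Separates.card_insert_inter (hL : Separates L 𝓓 c) {D : Finset ℕ} {v : ℕ} (hD : D ∈ 𝓓)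
    (hv : v ∈ c D) : #(insert v D ∩ L) = 1 := by
  rw [insert_inter_of_mem ((hL D hD).1 hv), disjoint_iff_inter_eq_empty.1 (hL D hD).2,
    insert_empty_eq, card_singleton]

/-- Some vertex of the kernel `D` is recorded for an edge of the star at `D`. -/
def Exposed (T c : Finset ℕ → Finset ℕ) (D : Finset ℕ) : Prop :=
  ∃ v ∈ c D, ∃ y ∈ D, y ∈ recorded T ((insert v D).erase y)

/-- The edges of the stars with kernels in `𝓓` and centres given by `c`. -/
def starEdges (𝓓 : Finset (Finset ℕ)) (c : Finset ℕ → Finset ℕ) : Finset (Finset ℕ) :=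
  𝓓.biUnion fun D ↦ (c D).image fun v ↦ insert v D

lemma mem_starEdges {E : Finset ℕ} : E ∈ starEdges 𝓓 c ↔ ∃ D ∈ 𝓓, ∃ v ∈ c D, insert v D = E := by
  simp only [starEdges, mem_biUnion, mem_image]

lemma IsStarSystem.card_exposed_le (h : IsStarSystem X 𝓗 𝓓 c q) (hL : Separates L 𝓓 c)
    (hT : ∀ Q, #(T Q) ≤ m) (h𝓗 : ∀ Z ∈ 𝓗, #Z ≤ k) :
    #{D ∈ 𝓓 | Exposed T c D} ≤ #𝓗 * (2 ^ k * m) := by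
  have hexposed : ∀ D ∈ {D ∈ 𝓓 | Exposed T c D}, Exposed T c D := fun D hD ↦ (mem_filter.1 hD).2
  choose! v hv y hyD hy using hexposed
  refine le_trans (card_le_card_of_injOn (fun D ↦ ⟨(insert (v D) D).erase (y D), y D⟩)
    (fun D hD ↦ ?_) fun D hD D' hD' hDD' ↦ ?_) (card_sigma_recorded_le hT h𝓗)
  · exact mem_sigma.2 ⟨h.erase_mem D (mem_filter.1 hD).1 _ (hv D hD) _ (hyD D hD), hy D hD⟩
  · obtain ⟨herase, hyy⟩ := Sigma.mk.inj hDD'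
    have hinsert : insert (v D) D = insert (v D') D' := by
      rw [← insert_erase (mem_insert_of_mem (hyD D hD) : y D ∈ insert (v D) D), herase,
        eq_of_heq hyy, insert_erase (mem_insert_of_mem (hyD D' hD'))]
    rw [← hL.insert_sdiff (mem_filter.1 hD).1 (hv D hD), hinsert,
      hL.insert_sdiff (mem_filter.1 hD').1 (hv D' hD')]

/- If a good star survived, the vertex recorded for each of its edges would be the centre, always
for the same minimal-rank set `Q ⊆ D`, so `T Q ∩ L` would contain all `q + 1` centres. -/
lemma exists_insert_notMem_of_caught {𝒬 C : Finset (Finset ℕ)} {D A : Finset ℕ}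
    (hD : Disjoint D A) (hAL : A ⊆ L) (hA : #A = q + 1) (hTL : ∀ Q, #(T Q ∩ L) ≤ q)
    (hcaught : ∀ E ∈ C, Caught id 𝒬 T r E)
    (hgood : ∀ v ∈ A, ∀ y ∈ D, y ∉ recorded T ((insert v D).erase y)) :
    ∃ v ∈ A, insert v D ∉ C := by
  by_contra! hC
  have hrec : ∀ v ∈ A, ∃ Q ∈ 𝒬, Q ⊆ D ∧ v ∈ T Q ∧ ∀ Q' ∈ 𝒬, Q' ⊆ D → Q' ≠ Q → r Q < r Q' := by
    intro v hv
    obtain ⟨Q, hQ𝒬, hQ, hmeet, hmin⟩ := hcaught _ (hC v hv)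
    obtain ⟨y, hyT, hy⟩ := not_disjoint_iff.1 hmeet
    obtain ⟨hyE, hyQ⟩ := Finset.mem_sdiff.1 hy
    have hQy : Q ⊆ (insert v D).erase y := subset_erase.2 ⟨hQ, hyQ⟩
    obtain rfl : y = v := (mem_insert.1 hyE).resolve_right fun hyD ↦
      hgood v hv y hyD (mem_biUnion.2 ⟨Q, mem_powerset.2 hQy, hyT⟩)
    rw [erase_insert (disjoint_right.1 hD hv)] at hQy
    exact ⟨Q, hQ𝒬, hQy, hyT, fun Q' hQ' hQ'D ↦ hmin Q' hQ' (hQ'D.trans (subset_insert _ _))⟩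
  obtain ⟨v₀, hv₀⟩ := card_pos.1 (q.succ_pos.trans_eq hA.symm)
  obtain ⟨Q, hQ𝒬, hQD, -, hmin⟩ := hrec v₀ hv₀
  have hAT : A ⊆ T Q ∩ L := by
    refine subset_inter (fun v hv ↦ ?_) hAL
    obtain ⟨Q', hQ'𝒬, hQ'D, hvQ', hmin'⟩ := hrec v hv
    obtain rfl : Q' = Q := by
      by_contra hne
      exact lt_asymm (hmin Q' hQ'𝒬 hQ'D hne) (hmin' Q hQ𝒬 hQD (Ne.symm hne))
    exact hvQ'
  have := (card_le_card hAT).trans (hTL Q)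
  omega

lemma IsStarSystem.card_not_exposed_le {𝒬 C : Finset (Finset ℕ)} (h : IsStarSystem X 𝓗 𝓓 c q)
    (hL : Separates L 𝓓 c) (hTL : ∀ Q, #(T Q ∩ L) ≤ q) (hcaught : ∀ E ∈ C, Caught id 𝒬 T r E) :
    #{D ∈ 𝓓 | ¬ Exposed T c D} ≤ #(starEdges 𝓓 c \ C) := by
  have hgood : ∀ D ∈ {D ∈ 𝓓 | ¬ Exposed T c D}, ∃ v ∈ c D, insert v D ∉ C := by
    intro D hD
    obtain ⟨hD, hgood⟩ := mem_filter.1 hD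
    simp only [Exposed, not_exists, not_and] at hgood
    exact exists_insert_notMem_of_caught (disjoint_right.2 (h.notMem D hD)) (hL D hD).1
      (h.card_centers D hD) hTL hcaught hgood
  choose! v hv hvC using hgood
  refine card_le_card_of_injOn (fun D ↦ insert (v D) D) (fun D hD ↦ ?_) fun D hD D' hD' hDD' ↦ ?_
  · exact Finset.mem_sdiff.2 ⟨mem_starEdges.2 ⟨D, (mem_filter.1 hD).1, v D, hv D hD, rfl⟩,
      hvC D hD⟩
  · have hinsert : insert (v D) D = insert (v D') D' := hDD'
    rw [← hL.insert_sdiff (mem_filter.1 hD).1 (hv D hD), hinsert,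
      hL.insert_sdiff (mem_filter.1 hD').1 (hv D' hD')]

lemma IsStarSystem.hasContainers {S : Finset α} (h : IsStarSystem X 𝓗 𝓓 c q)
    (hL : Separates L 𝓓 c) (hH : IsKTree k H) (hov : Overlapping ℓ H) (hS : IsCrosscut H S)
    (hSq : #S ≤ q + 1) (hX : IsKGraphOn k n X) (h𝓗 : ∀ Z ∈ 𝓗, #Z ≤ k) :
    HasContainers H X (recordBound n #(vertexSet H) ℓ) fun C ↦
      #C + #𝓓 ≤ #X + #𝓗 * (2 ^ k * #(vertexSet H)) := by
  have hsub : starEdges 𝓓 c ⊆ X := by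
    intro E hE
    obtain ⟨D, hD, v, hv, rfl⟩ := mem_starEdges.1 hE
    exact h.insert_mem D hD v hv
  refine ((hasContainers_of_isCrosscut hH hov hS hSq (fun E hE ↦ hX E (hsub hE))
    (L := L) fun E hE ↦ ?_).mono ?_).extend hsub
  · obtain ⟨D, hD, v, hv, rfl⟩ := mem_starEdges.1 hE
    exact hL.card_insert_inter hD hv
  · rintro C hC ⟨T, r, hT, hTL, hcaught⟩
    have hbad := h.card_exposed_le hL hT h𝓗
    have hgood := h.card_not_exposed_le hL hTL hcaught
    rw [← card_filter_add_card_filter_not (s := 𝓓) fun D ↦ Exposed T c D]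
    have hsdiff : #(starEdges 𝓓 c \ C) + #C = #(starEdges 𝓓 c) := card_sdiff_add_card_eq_card hC
    omega

lemma hasContainers_of_light_facet {S : Finset α} (hH : IsKTree k H) (hk : 1 ≤ k)
    (hov : Overlapping ℓ H) (hS : IsCrosscut H S) (hSq : #S ≤ q + 1) (hX : IsKGraphOn k n X)
    (h𝓗 : ∀ Z ∈ 𝓗, #Z ≤ k)
    (hs : ∀ E ∈ X, ∃ x ∈ E, uDeg X (E.erase x) < s ∧ ∀ y ∈ E.erase x, E.erase y ∈ 𝓗) :
    ∃ d, #X ≤ q * n.choose (k - 1) + s * (2 ^ (k + q) * d) ∧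
      HasContainers H X (recordBound n #(vertexSet H) ℓ) fun C ↦
        #C + d ≤ #X + #𝓗 * (2 ^ k * #(vertexSet H)) := by
  obtain ⟨𝓓, h𝓓, c, hstar, hcard⟩ := exists_isStarSystem hX hs q
  have hc : ∀ D ∈ 𝓓, c D ⊆ vtx n ∧ Disjoint D (c D) := fun D hD ↦
    ⟨fun v hv ↦ (hX _ (hstar.insert_mem D hD v hv)).1 (mem_insert_self v D),
      disjoint_right.2 (hstar.notMem D hD)⟩
  obtain ⟨L, hL⟩ := exists_separating (a := k + q) (fun D hD ↦ (mem_powersetCard.1 (h𝓓 hD)).1) hc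
    fun D hD ↦ by
      rw [hstar.card_centers D hD, (mem_powersetCard.1 (h𝓓 hD)).2]
      omega
  refine ⟨_, hcard.trans (Nat.add_le_add_left (Nat.mul_le_mul_left s hL) _), ?_⟩
  exact (hstar.subset (filter_subset _ _)).hasContainers (fun D hD ↦ (mem_filter.1 hD).2)
    hH hov hS hSq hX h𝓗

end Stars

section FacetDegrees

variable {α : Type} [DecidableEq α] {H : Finset (Finset α)} {F G : Finset (Finset ℕ)}
  {E : Finset ℕ} {S : Finset α} {k n ℓ q s s' y : ℕ}

lemma uDeg_mono (h : F ⊆ G) (D : Finset ℕ) : uDeg F D ≤ uDeg G D :=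
  card_le_card (filter_subset_filter _ h)

/-- The vertices of `E` opposite to a facet of `E` of degree less than `s` in `G`. -/
def lightVertices (G : Finset (Finset ℕ)) (s : ℕ) (E : Finset ℕ) : Finset ℕ :=
  {x ∈ E | uDeg G (E.erase x) < s}

/-- The edges of `G` with a facet whose degree in `G` is at least `s` and less than `s'`. -/
def midEdges (G : Finset (Finset ℕ)) (s s' : ℕ) : Finset (Finset ℕ) :=
  {E ∈ G | ∃ y ∈ E, s ≤ uDeg G (E.erase y) ∧ uDeg G (E.erase y) < s'}

/-- The `(k - 1)`-subsets of `[n]` of degree at least `s` in `G`. -/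
def heavyFacets (n k : ℕ) (G : Finset (Finset ℕ)) (s : ℕ) : Finset (Finset ℕ) :=
  {D ∈ (vtx n).powersetCard (k - 1) | s ≤ uDeg G D}

lemma card_le_of_mem_heavyFacets {Z : Finset ℕ} (hZ : Z ∈ heavyFacets n k G s) : #Z ≤ k :=
  (mem_powersetCard.1 (mem_filter.1 hZ).1).2.trans_le (Nat.sub_le k 1)

lemma erase_mem_heavyFacets (hG : IsKGraphOn k n G) (hE : E ∈ G \ midEdges G s s') (hy : y ∈ E)
    (hlight : y ∉ lightVertices G s E) : E.erase y ∈ heavyFacets n k G s' := by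
  obtain ⟨hEG, hmid⟩ := Finset.mem_sdiff.1 hE
  have hs : s ≤ uDeg G (E.erase y) := not_lt.1 fun h ↦ hlight (mem_filter.2 ⟨hy, h⟩)
  refine mem_filter.2 ⟨mem_powersetCard.2 ⟨(erase_subset y E).trans (hG E hEG).1, ?_⟩, ?_⟩
  · rw [card_erase_of_mem hy, (hG E hEG).2]
  · exact not_lt.1 fun h ↦ hmid (mem_filter.2 ⟨hEG, y, hy, hs, h⟩)

lemma card_heavyFacets_mul_le (hk : 1 ≤ k) (hG : IsKGraphOn k n G) :
    #(heavyFacets n k G s) * s ≤ k * #G := by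
  calc #(heavyFacets n k G s) * s ≤ ∑ D ∈ heavyFacets n k G s, uDeg G D :=
        card_nsmul_le_sum _ _ _ fun D hD ↦ (mem_filter.1 hD).2
    _ = ∑ E ∈ G, #{D ∈ heavyFacets n k G s | D ⊆ E} := by
        simp only [uDeg, card_filter]
        exact sum_comm
    _ ≤ #G • k := by
        refine sum_le_card_nsmul _ _ _ fun E hE ↦ ?_
        have hsub : {D ∈ heavyFacets n k G s | D ⊆ E} ⊆ E.powersetCard (k - 1) := fun D hD ↦
          mem_powersetCard.2 ⟨(mem_filter.1 hD).2,
            (mem_powersetCard.1 (mem_filter.1 (mem_filter.1 hD).1).1).2⟩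
        refine (card_le_card hsub).trans_eq ?_
        rw [card_powersetCard, (hG E hE).2, Nat.choose_symm hk, Nat.choose_one_right]
    _ = k * #G := by rw [smul_eq_mul, mul_comm]

/- Each facet degree of an edge lies in at most one of the ranges `[Λ ^ i, Λ ^ (i + 1))`. -/
lemma exists_mul_card_midEdges_le (hG : IsKGraphOn k n G) (Λ : ℕ) {r : ℕ} (hr : 1 ≤ r) :
    ∃ i < r, r * #(midEdges G (Λ ^ i) (Λ ^ (i + 1))) ≤ k * #G := by
  simp only [← mem_range]
  refine exists_le_of_sum_le (nonempty_range_iff.2 (by omega)) ?_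
  let mid (E : Finset ℕ) (i : ℕ) : Prop :=
    ∃ y ∈ E, Λ ^ i ≤ uDeg G (E.erase y) ∧ uDeg G (E.erase y) < Λ ^ (i + 1)
  have hranges : ∀ E ∈ G, #{i ∈ range r | mid E i} ≤ k := by
    intro E hE
    rw [← (hG E hE).2]
    refine (card_le_card fun i hi ↦ ?_).trans
      (card_image_le (s := E) (f := fun y ↦ Nat.log Λ (uDeg G (E.erase y))))
    obtain ⟨-, y, hy, hle, hlt⟩ := mem_filter.1 hi
    exact mem_image.2 ⟨y, hy, Nat.log_eq_of_pow_le_of_lt_pow hle hlt⟩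
  calc ∑ i ∈ range r, r * #(midEdges G (Λ ^ i) (Λ ^ (i + 1)))
      = r * ∑ E ∈ G, #{i ∈ range r | mid E i} := by
        rw [← mul_sum]
        congr 1
        exact (sum_card_bipartiteAbove_eq_sum_card_bipartiteBelow mid).symm
    _ ≤ r * (#G * k) := Nat.mul_le_mul_left r (sum_le_card_nsmul _ _ _ hranges)
    _ = ∑ _i ∈ range r, k * #G := by rw [sum_const, card_range, smul_eq_mul, mul_comm k]

/-- The edges of `G` which are not in `midEdges G s s'` and have a number of facets of degree less
than `s` satisfying `p`. -/
noncomputable def cleanEdges (G : Finset (Finset ℕ)) (s s' : ℕ) (p : ℕ → Prop) :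
    Finset (Finset ℕ) :=
  {E ∈ G \ midEdges G s s' | p #(lightVertices G s E)}

lemma mem_cleanEdges {p : ℕ → Prop} :
    E ∈ cleanEdges G s s' p ↔ E ∈ G \ midEdges G s s' ∧ p #(lightVertices G s E) :=
  mem_filter

lemma cleanEdges_subset {p : ℕ → Prop} : cleanEdges G s s' p ⊆ G :=
  (filter_subset _ _).trans sdiff_subset

lemma card_le_card_midEdges_add_card_cleanEdges (G : Finset (Finset ℕ)) (s s' : ℕ) :
    #G ≤ #(midEdges G s s') + #(cleanEdges G s s' (· = 0)) + #(cleanEdges G s s' (· = 1)) +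
      #(cleanEdges G s s' (1 < ·)) := by
  have hcover : G ⊆ midEdges G s s' ∪ cleanEdges G s s' (· = 0) ∪ cleanEdges G s s' (· = 1) ∪
      cleanEdges G s s' (1 < ·) := by
    intro E hE
    simp only [mem_union, mem_cleanEdges, Finset.mem_sdiff]
    have : #(lightVertices G s E) = 0 ∨ #(lightVertices G s E) = 1 ∨
      1 < #(lightVertices G s E) := by omega
    tauto
  grind [card_le_card hcover, card_union_le]

lemma hasContainers_cleanEdges_zero (hH : IsKTree k H) (h2 : TwoContractible H)
    (hov : Overlapping ℓ H) (hG : IsKGraphOn k n G) :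
    HasContainers H G (recordBound n #(vertexSet H) ℓ) fun C ↦
      #C + #(cleanEdges G s s' (· = 0)) ≤
        #G + #(heavyFacets n k G s') * (2 ^ k * #(vertexSet H)) := by
  have hX : IsKGraphOn k n (cleanEdges G s s' (· = 0)) := fun E hE ↦ hG E (cleanEdges_subset hE)
  refine ((hasContainers_of_erase_mem hH h2 hov hX (𝒵 := heavyFacets n k G s')
    (fun Z ↦ card_le_of_mem_heavyFacets) fun E hE y hy ↦ ?_).mono
      fun C _ hC ↦ ?_).extend cleanEdges_subset
  · obtain ⟨hEclean, hlight⟩ := mem_cleanEdges.1 hE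
    refine erase_mem_heavyFacets hG hEclean hy ?_
    rw [card_eq_zero.1 hlight]
    exact notMem_empty y
  · omega

lemma exists_hasContainers_cleanEdges_one (hH : IsKTree k H) (hk : 1 ≤ k) (hov : Overlapping ℓ H)
    (hS : IsCrosscut H S) (hSq : #S ≤ q + 1) (hG : IsKGraphOn k n G) :
    ∃ d, #(cleanEdges G s s' (· = 1)) ≤ q * n.choose (k - 1) + s * (2 ^ (k + q) * d) ∧
      HasContainers H G (recordBound n #(vertexSet H) ℓ) fun C ↦
        #C + d ≤ #G + #(heavyFacets n k G s') * (2 ^ k * #(vertexSet H)) := by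
  have hX : IsKGraphOn k n (cleanEdges G s s' (· = 1)) := fun E hE ↦ hG E (cleanEdges_subset hE)
  obtain ⟨d, hd, hC⟩ := hasContainers_of_light_facet (s := s) hH hk hov hS hSq hX
    (𝓗 := heavyFacets n k G s') (fun Z ↦ card_le_of_mem_heavyFacets) fun E hE ↦ by
      obtain ⟨hEclean, hlight⟩ := mem_cleanEdges.1 hE
      obtain ⟨x, hx⟩ := card_eq_one.1 hlight
      obtain ⟨hxE, hdeg⟩ := mem_filter.1 (hx.ge (mem_singleton_self x))
      refine ⟨x, hxE, (uDeg_mono cleanEdges_subset _).trans_lt hdeg, fun y hy ↦ ?_⟩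
      refine erase_mem_heavyFacets hG hEclean (mem_of_mem_erase hy) ?_
      rw [hx]
      exact notMem_singleton.2 (ne_of_mem_erase hy)
  exact ⟨d, hd, hC.extend cleanEdges_subset⟩

lemma hasContainers_cleanEdges_one_lt (hH : IsKTree k H) (h2 : TwoContractible H)
    (hov : Overlapping ℓ H) (hG : IsKGraphOn k n G) :
    HasContainers H G (recordBound n #(vertexSet H) ℓ) fun C ↦
      #C + #(cleanEdges G s s' (1 < ·)) ≤
        #G + s * (n.choose (k - 2) * (2 ^ k * #(vertexSet H))) := by
  have hX : IsKGraphOn k n (cleanEdges G s s' (1 < ·)) := fun E hE ↦ hG E (cleanEdges_subset hE)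
  refine ((hasContainers_of_uDeg_erase_lt (s := s) hH h2 hov hX fun E hE ↦ ?_).mono
    fun C _ hC ↦ ?_).extend cleanEdges_subset
  · exact (mem_cleanEdges.1 hE).2.trans_le (card_le_card (monotone_filter_right E fun x _ hx ↦
      (uDeg_mono cleanEdges_subset _).trans_lt hx))
  · omega

end FacetDegrees

section Decrement

variable {α : Type} [DecidableEq α] {H : Finset (Finset α)} {S : Finset α}
  {G : Finset (Finset ℕ)} {k n ℓ q s s' : ℕ} {ε δ : ℝ}

lemma hasContainers_add_le_of_midEdges_le (hH : IsKTree k H) (h2 : TwoContractible H)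
    (hov : Overlapping ℓ H) (hS : IsCrosscut H S) (hSq : #S ≤ q + 1) (hG : IsKGraphOn k n G)
    (hs : 1 ≤ s) (hδ : 0 ≤ δ) (hδε : 8 * (s * 2 ^ (k + q)) * δ ≤ ε * n.choose (k - 1))
    (hlarge : (q + ε) * n.choose (k - 1) ≤ #G)
    (hmid : 4 * (#(midEdges G s s') : ℝ) ≤ ε * n.choose (k - 1))
    (hheavy : 8 * (s * 2 ^ (k + q)) * (#(heavyFacets n k G s') * (2 ^ k * #(vertexSet H))) ≤
      ε * n.choose (k - 1))
    (hlight : 8 * (s * (n.choose (k - 2) * (2 ^ k * #(vertexSet H)))) ≤ ε * n.choose (k - 1)) :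
    HasContainers H G (recordBound n #(vertexSet H) ℓ) fun C ↦ #C + δ ≤ #G := by
  have hsA : (1 : ℝ) ≤ s * 2 ^ (k + q) :=
    one_le_mul_of_one_le_of_one_le (mod_cast hs) (one_le_pow₀ one_le_two)
  have hδ' : 8 * δ ≤ ε * n.choose (k - 1) := by nlinarith
  set h : ℝ := #(heavyFacets n k G s') * (2 ^ k * #(vertexSet H)) with hh
  have hh' : 8 * h ≤ ε * n.choose (k - 1) := by
    have : 0 ≤ h := by positivity
    nlinarith
  by_cases h₀ : ε * n.choose (k - 1) ≤ 4 * #(cleanEdges G s s' (· = 0))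
  · refine (hasContainers_cleanEdges_zero (s := s) (s' := s') hH h2 hov hG).mono fun C _ hC ↦ ?_
    have : (#C : ℝ) + #(cleanEdges G s s' (· = 0)) ≤ #G + h := by
      rw [hh]
      exact_mod_cast hC
    linarith
  by_cases h₂ : ε * n.choose (k - 1) ≤ 4 * #(cleanEdges G s s' (1 < ·))
  · refine (hasContainers_cleanEdges_one_lt (s := s) (s' := s') hH h2 hov hG).mono
      fun C _ hC ↦ ?_
    have : (#C : ℝ) + #(cleanEdges G s s' (1 < ·)) ≤
      #G + s * (n.choose (k - 2) * (2 ^ k * #(vertexSet H))) := by exact_mod_cast hC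
    linarith
  obtain ⟨d, hd, hcontainers⟩ := exists_hasContainers_cleanEdges_one (s := s) (s' := s')
    hH (one_le_two.trans (hH.two_le h2)) hov hS hSq hG
  refine hcontainers.mono fun C _ hC ↦ ?_
  have hC : (#C : ℝ) + d ≤ #G + h := by
    rw [hh]
    exact_mod_cast hC
  have hcard : (#G : ℝ) ≤ #(midEdges G s s') + #(cleanEdges G s s' (· = 0)) +
      #(cleanEdges G s s' (· = 1)) + #(cleanEdges G s s' (1 < ·)) :=
    mod_cast card_le_card_midEdges_add_card_cleanEdges G s s'
  have hd : (#(cleanEdges G s s' (· = 1)) : ℝ) ≤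
      q * n.choose (k - 1) + s * 2 ^ (k + q) * d := by
    rw [mul_assoc (s : ℝ)]
    exact_mod_cast hd
  have hdh : s * 2 ^ (k + q) * (8 * (δ + h)) ≤ s * 2 ^ (k + q) * (8 * (d : ℝ)) := by linarith
  linarith [le_of_mul_le_mul_left hdh (by positivity)]

lemma exists_forall_mul_choose_le {C η : ℝ} (hη : 0 < η) (j : ℕ) :
    ∃ n₀ : ℕ, ∀ n ≥ n₀, C * n.choose j ≤ η * n.choose (j + 1) := by
  obtain ⟨a, ha⟩ := exists_nat_ge (C * (j + 1) / η)
  refine ⟨a + j, fun n hn ↦ ?_⟩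
  have hna : C * (j + 1) ≤ η * (n - j : ℕ) := by
    rw [div_le_iff₀' hη] at ha
    refine ha.trans (mul_le_mul_of_nonneg_left ?_ hη.le)
    exact_mod_cast Nat.le_sub_of_add_le hn
  have hchoose : (n.choose (j + 1) : ℝ) * (j + 1) = n.choose j * (n - j : ℕ) :=
    mod_cast Nat.choose_succ_right_eq n j
  refine le_of_mul_le_mul_right (a := (j + 1 : ℝ)) ?_ (by positivity)
  calc C * n.choose j * (j + 1) = C * (j + 1) * n.choose j := by ring
    _ ≤ η * (n - j : ℕ) * n.choose j := by gcongr
    _ = η * n.choose (j + 1) * (j + 1) := by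
      rw [mul_assoc η, mul_assoc η, hchoose, mul_comm (n.choose j : ℝ)]

/- Take `Λ ≥ k / θ`. Some range `[Λ ^ i, Λ ^ (i + 1))` with `i < Λ` is met by the facet degrees of
at most `(k / Λ) * #G` edges, and double counting bounds the number of facets above it. -/
lemma exists_degree_gap (hk : 1 ≤ k) {θ : ℝ} (hθ : 0 < θ) :
    ∃ Λ : ℕ, 1 ≤ Λ ∧ ∀ n G, IsKGraphOn k n G → ∃ i < Λ,
      #(midEdges G (Λ ^ i) (Λ ^ (i + 1))) ≤ θ * #G ∧
      (Λ : ℝ) ^ i * #(heavyFacets n k G (Λ ^ (i + 1))) ≤ θ * #G := by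
  obtain ⟨Λ, hΛ⟩ := exists_nat_ge (max 1 (k / θ))
  simp only [max_le_iff, div_le_iff₀' hθ, Nat.one_le_cast] at hΛ
  refine ⟨Λ, hΛ.1, fun n G hG ↦ ?_⟩
  have hΛ₀ : (0 : ℝ) < Λ := mod_cast hΛ.1
  have hdiv {x : ℝ} (hx : Λ * x ≤ k * #G) : x ≤ θ * #G := by
    refine le_of_mul_le_mul_left (hx.trans ?_) hΛ₀
    linarith [mul_le_mul_of_nonneg_right hΛ.2 (Nat.cast_nonneg (α := ℝ) #G)]
  obtain ⟨i, hi, hmid⟩ := exists_mul_card_midEdges_le hG Λ hΛ.1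
  refine ⟨i, hi, hdiv (mod_cast hmid), hdiv ?_⟩
  rw [← mul_assoc, ← pow_succ', mul_comm]
  exact_mod_cast card_heavyFacets_mul_le hk hG

lemma exists_decrement (hH : IsKTree k H) (h2 : TwoContractible H) (hov : Overlapping ℓ H)
    (hS : IsCrosscut H S) (hSq : #S ≤ q + 1) (hε : 0 < ε) {M : ℝ} (hM : 0 < M) :
    ∃ c : ℝ, 0 < c ∧ ∃ n₀ : ℕ, ∀ n ≥ n₀, ∀ G, IsKGraphOn k n G →
      (q + ε) * n.choose (k - 1) ≤ #G → #G ≤ M * n.choose (k - 1) →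
      HasContainers H G (recordBound n #(vertexSet H) ℓ)
        fun C ↦ #C + c * n.choose (k - 1) ≤ #G := by
  set a : ℝ := 2 ^ (k + q)
  set b : ℝ := 2 ^ k * #(vertexSet H)
  have ha : 0 < a := by positivity
  have hb : 0 ≤ b := by positivity
  obtain ⟨Λ, hΛ, hgap⟩ := exists_degree_gap (one_le_two.trans (hH.two_le h2))
    (by positivity : 0 < ε / ((4 + 8 * a * b) * M))
  obtain ⟨n₀, hn₀⟩ := exists_forall_mul_choose_le hε (C := 8 * (Λ ^ Λ * b)) (k - 2)
  rw [show k - 2 + 1 = k - 1 by have := hH.two_le h2; omega] at hn₀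
  refine ⟨ε / (8 * (Λ ^ Λ * a)), by positivity, n₀, fun n hn G hG hlarge hsmall ↦ ?_⟩
  obtain ⟨i, hi, hmid, hheavy⟩ := hgap n G hG
  set N := (n.choose (k - 1) : ℝ)
  have hpow : ((Λ ^ i : ℕ) : ℝ) ≤ Λ ^ Λ := mod_cast Nat.pow_le_pow_right hΛ hi.le
  have hθ : (4 + 8 * a * b) * (ε / ((4 + 8 * a * b) * M) * #G) ≤ ε * N := by
    calc (4 + 8 * a * b) * (ε / ((4 + 8 * a * b) * M) * #G) = ε / M * #G := by field_simp
      _ ≤ ε / M * (M * N) := by gcongr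
      _ = ε * N := by field_simp
  have hθ₀ : 0 ≤ ε / ((4 + 8 * a * b) * M) * #G := by positivity
  refine hasContainers_add_le_of_midEdges_le (s := Λ ^ i) (s' := Λ ^ (i + 1)) hH h2 hov hS hSq hG
    (Nat.one_le_pow _ _ hΛ) (by positivity) ?_ hlarge ?_ ?_ ?_
  · calc 8 * (((Λ ^ i : ℕ) : ℝ) * a) * (ε / (8 * (Λ ^ Λ * a)) * N)
        ≤ 8 * (Λ ^ Λ * a) * (ε / (8 * (Λ ^ Λ * a)) * N) := by gcongr
      _ = ε * N := by field_simp
  · nlinarith [mul_nonneg ha.le hb]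
  · rw [Nat.cast_pow]
    nlinarith [mul_le_mul_of_nonneg_left hheavy (mul_nonneg ha.le hb)]
  · calc 8 * (((Λ ^ i : ℕ) : ℝ) * (n.choose (k - 2) * b))
        ≤ 8 * (Λ ^ Λ * (n.choose (k - 2) * b)) := by gcongr
      _ = 8 * (Λ ^ Λ * b) * n.choose (k - 2) := by ring
      _ ≤ ε * N := hn₀ n hn

end Decrement

section Iteration

variable {α : Type} [DecidableEq α] {H : Finset (Finset α)} {S : Finset α}
  {G₀ : Finset (Finset ℕ)} {b k ℓ q : ℕ} {c u ε : ℝ}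

lemma HasContainers.of_forall_add_le (hb : 1 ≤ b)
    (hstep : ∀ G ⊆ G₀, u ≤ #G → HasContainers H G b fun C ↦ #C + c ≤ #G) (j : ℕ) :
    ∀ G ⊆ G₀, #G ≤ u + j * c → HasContainers H G (b ^ j) fun C ↦ #C ≤ u := by
  induction j with
  | zero => exact fun G _ hcard ↦ .self (by simpa using hcard) le_rfl
  | succ j ih =>
    intro G hG hcard
    obtain hlarge | hsmall := le_or_gt u #G
    · rw [pow_succ']
      refine (hstep G hG hlarge).bind fun C hC hdrop ↦ ih C (hC.trans hG) ?_
      push_cast at hcard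
      linarith
    · exact .self hsmall.le (Nat.one_le_pow _ _ hb)

lemma one_le_recordBound (n m ℓ : ℕ) : 1 ≤ recordBound n m ℓ :=
  Nat.one_le_pow _ _ (Nat.one_le_pow _ _ n.succ_pos)

lemma exists_forall_hasContainers (hH : IsKTree k H) (h2 : TwoContractible H)
    (hov : Overlapping ℓ H) (hS : IsCrosscut H S) (hSq : #S ≤ q + 1) (hε : 0 < ε) :
    ∃ J n₀ : ℕ, ∀ n ≥ n₀,
      HasContainers H ((vtx n).powersetCard k) (recordBound n #(vertexSet H) ℓ ^ J)
        fun C ↦ #C ≤ (q + ε) * n.choose (k - 1) := by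
  let M : ℝ := 2 ^ k * #(vertexSet H) + 1
  obtain ⟨c, hc, n₀, hstep⟩ := exists_decrement hH h2 hov hS hSq hε (by positivity : 0 < M)
  obtain ⟨j, hj⟩ := exists_nat_ge (M / c)
  rw [div_le_iff₀ hc] at hj
  refine ⟨j + 1, n₀, fun n hn ↦ ?_⟩
  have huniform : IsKGraphOn k n ((vtx n).powersetCard k) := fun E ↦ mem_powersetCard.1
  have hfirst : HasContainers H ((vtx n).powersetCard k) (recordBound n #(vertexSet H) ℓ)
      fun C ↦ #C ≤ M * n.choose (k - 1) := by
    refine (hasContainers_of_erase_mem hH h2 hov huniform (𝒵 := (vtx n).powersetCard (k - 1))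
      (fun Z hZ ↦ (mem_powersetCard.1 hZ).2.trans_le (Nat.sub_le k 1))
      fun E hE y hy ↦ ?_).mono fun C _ hC ↦ ?_
    · obtain ⟨hEn, hEk⟩ := huniform E hE
      exact mem_powersetCard.2 ⟨(erase_subset y E).trans hEn, by rw [card_erase_of_mem hy, hEk]⟩
    · rw [card_powersetCard, card_vtx] at hC
      have : (#C : ℝ) ≤ n.choose (k - 1) * (2 ^ k * #(vertexSet H)) := mod_cast hC
      linarith [(n.choose (k - 1)).cast_nonneg (α := ℝ)]
  rw [pow_succ']
  refine hfirst.bind fun C hC hCcard ↦ ?_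
  refine HasContainers.of_forall_add_le (c := c * n.choose (k - 1)) (one_le_recordBound _ _ _)
    (fun G hG hlarge ↦ ?_) j C Subset.rfl ?_
  · exact hstep n hn G (fun E hE ↦ huniform E (hC (hG hE))) hlarge
      ((Nat.cast_le.2 (card_le_card hG)).trans hCcard)
  · have := mul_le_mul_of_nonneg_right hj (n.choose (k - 1)).cast_nonneg
    have : 0 ≤ (q + ε) * n.choose (k - 1) := by positivity
    linarith

end Iteration

section Main

variable {α : Type} [DecidableEq α] {H : Finset (Finset α)} {S : Finset α} {j k ℓ n : ℕ} {ε : ℝ}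

lemma pow_le_mul_choose (h : 2 * j ≤ n) : (n : ℝ) ^ j ≤ 2 ^ j * j.factorial * n.choose j := by
  have hhalf : (n : ℝ) ≤ 2 * (n + 1 - j : ℕ) := by
    have : n ≤ 2 * (n + 1 - j) := by omega
    exact_mod_cast this
  have hchoose := Nat.pow_le_choose (α := ℝ) j n
  rw [div_le_iff₀ (by positivity)] at hchoose
  calc (n : ℝ) ^ j ≤ 2 ^ j * (n + 1 - j : ℕ) ^ j := by rw [← mul_pow]; gcongr
    _ ≤ 2 ^ j * (n.choose j * j.factorial) := by gcongr
    _ = 2 ^ j * j.factorial * n.choose j := by ring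

lemma log_recordBound (n m ℓ : ℕ) :
    Real.log (recordBound n m ℓ) = (n + 1) ^ ℓ * ((m + ℓ) * Real.log (n + 1)) := by
  simp only [recordBound, Nat.cast_pow, Real.log_pow, Nat.cast_add, Nat.cast_one]

lemma exists_forall_recordBound_pow_le (hℓ : ℓ ≤ j) (m J : ℕ) :
    ∃ K : ℝ, 0 < K ∧ ∃ n₀ : ℕ, ∀ n ≥ n₀, (recordBound n m ℓ : ℝ) ^ J ≤
      Real.exp (K * Real.log n * n.choose j / n ^ (j - ℓ)) := by
  let B : ℝ := 2 ^ j * j.factorial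
  refine ⟨(J * (m + ℓ) + 1) * (2 ^ ℓ * 2) * B, by positivity, 2 * j + 2, fun n hn ↦ ?_⟩
  have hn₂ : (2 : ℝ) ≤ n := mod_cast (by omega : 2 ≤ n)
  have hlog : Real.log (n + 1) ≤ 2 * Real.log n := by
    rw [← Nat.cast_ofNat, ← Real.log_pow]
    exact Real.log_le_log (by positivity) (by nlinarith)
  have : 0 ≤ Real.log n := Real.log_nonneg (by linarith)
  have : 0 ≤ Real.log (n + 1) := Real.log_nonneg (by linarith)
  have hpow : ((n : ℝ) + 1) ^ ℓ ≤ 2 ^ ℓ * n ^ ℓ := by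
    rw [← mul_pow]
    gcongr
    linarith
  have hchoose : (n : ℝ) ^ ℓ ≤ B * n.choose j / n ^ (j - ℓ) := by
    rw [le_div_iff₀ (by positivity), ← pow_add, Nat.add_sub_cancel' hℓ]
    exact pow_le_mul_choose (by omega)
  have hrecord : 0 < (recordBound n m ℓ : ℝ) := Nat.cast_pos.2 (one_le_recordBound n m ℓ)
  rw [← Real.exp_log (pow_pos hrecord J), Real.exp_le_exp, Real.log_pow, log_recordBound]
  calc J * (((n : ℝ) + 1) ^ ℓ * ((m + ℓ) * Real.log (n + 1)))
      ≤ J * (2 ^ ℓ * n ^ ℓ * ((m + ℓ) * (2 * Real.log n))) := by gcongr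
    _ = J * (m + ℓ) * (2 ^ ℓ * 2) * Real.log n * n ^ ℓ := by ring
    _ ≤ (J * (m + ℓ) + 1) * (2 ^ ℓ * 2) * Real.log n * (B * n.choose j / n ^ (j - ℓ)) := by
        gcongr
        linarith
    _ = (J * (m + ℓ) + 1) * (2 ^ ℓ * 2) * B * Real.log n * n.choose j / n ^ (j - ℓ) := by ring

lemma Overlapping.min_of_isKTree (hov : Overlapping ℓ H) (hH : IsKTree k H) :
    Overlapping (min ℓ (k - 1)) H := by
  intro E hE F hF hEF
  refine le_min (hov E hE F hF hEF) (Nat.le_sub_one_of_lt ?_)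
  rw [← hH.2 E hE]
  refine card_lt_card (inter_subset_left.ssubset_of_ne fun h ↦ hEF ?_)
  exact eq_of_subset_of_card_le (inter_eq_left.1 h) (by rw [hH.2 E hE, hH.2 F hF])

lemma IsCrosscut.one_le_card (hS : IsCrosscut H S) (hH : H.Nonempty) : 1 ≤ #S := by
  obtain ⟨E, hE⟩ := hH
  exact (hS E hE).ge.trans (card_le_card inter_subset_right)

theorem stmt_18_general (hH : IsKTree k H) (h2 : TwoContractible H) (hov : Overlapping ℓ H)
    (hS : IsCrosscut H S) (hε : 0 < ε) :
    ∃ K : ℝ, 0 < K ∧ ∃ n₀ : ℕ, ∀ n ≥ n₀, ∃ 𝒞 : Finset (Finset (Finset ℕ)),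
      (∀ C ∈ 𝒞, IsKGraphOn k n C) ∧
      #𝒞 ≤ Real.exp (K * Real.log n * n.choose (k - 1) / n ^ (k - ℓ - 1)) ∧
      (∀ I, IsKGraphOn k n I → HFree H I → ∃ C ∈ 𝒞, I ⊆ C) ∧
      ∀ C ∈ 𝒞, #C ≤ (#S - 1 + ε) * n.choose (k - 1) := by
  have hS₁ := hS.one_le_card hH.1.nonempty
  obtain ⟨J, n₁, hcontainers⟩ := exists_forall_hasContainers (q := #S - 1) hH h2
    (hov.min_of_isKTree hH) hS (by omega) hε
  obtain ⟨K, hK, n₂, hbound⟩ := exists_forall_recordBound_pow_le (min_le_right ℓ (k - 1))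
    #(vertexSet H) J
  refine ⟨K, hK, max n₁ n₂, fun n hn ↦ ?_⟩
  obtain ⟨𝒞, hcard, hmem, hcover⟩ := hcontainers n (le_of_max_le_left hn)
  refine ⟨𝒞, fun C hC E hE ↦ mem_powersetCard.1 ((hmem C hC).1 hE), ?_,
    fun I hI ↦ hcover I fun E hE ↦ mem_powersetCard.2 (hI E hE), fun C hC ↦ ?_⟩
  · rw [show k - ℓ - 1 = k - 1 - min ℓ (k - 1) by omega]
    exact le_trans (mod_cast hcard) (hbound n (le_of_max_le_right hn))
  · simpa only [Nat.cast_sub hS₁, Nat.cast_one] using (hmem C hC).2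

end Main

/-- containers for `H`-free graphs: for a 2-contractible `ℓ`-overlapping
`k`-tree `H` with `t` edges and cross-cut number `σ`, and `ε > 0`, there is `K > 0` such
that for large `n` there is a family `𝒞` of at most
`exp(K·(log n)²·C(n,k−1)/n^{k−ℓ−1})` `k`-graphs on `[n]`, each of size at most
`(σ−1+ε)·C(n,k−1)`, containing every `H`-free `k`-graph on `[n]`. -/
theorem stmt_18 {α : Type} [DecidableEq α] (k ℓ t σ : ℕ) (hk : 4 ≤ k)
    (H : Finset (Finset α)) (hH : IsKTree k H) (h2 : TwoContractible H)
    (hov : Overlapping ℓ H) (hte : H.card = t) (hσ : IsCrosscutNumber H σ)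
    (ε : ℝ) (hε : 0 < ε) :
    ∃ K : ℝ, 0 < K ∧ ∃ n₀ : ℕ, ∀ n ≥ n₀,
      ∃ 𝒞 : Finset (Finset (Finset ℕ)),
        (∀ C ∈ 𝒞, IsKGraphOn k n C) ∧
        ((𝒞.card : ℝ) ≤
          Real.exp (K * (Real.log n) ^ 2 * (n.choose (k - 1) : ℝ) / (n : ℝ) ^ (k - ℓ - 1))) ∧
        (∀ I : Finset (Finset ℕ), IsKGraphOn k n I → HFree H I → ∃ C ∈ 𝒞, I ⊆ C) ∧
        (∀ C ∈ 𝒞, (C.card : ℝ) ≤ ((σ : ℝ) - 1 + ε) * (n.choose (k - 1) : ℝ)) := by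
  obtain ⟨⟨S, hS, rfl⟩, -⟩ := hσ
  obtain ⟨K, hK, n₀, h⟩ := stmt_18_general hH h2 hov hS hε
  refine ⟨K, hK, max n₀ 3, fun n hn ↦ ?_⟩
  obtain ⟨𝒞, hmem, hcard, h⟩ := h n (le_of_max_le_left hn)
  refine ⟨𝒞, hmem, hcard.trans (Real.exp_le_exp.2 ?_), h⟩
  have hn₃ : (3 : ℝ) ≤ n := mod_cast le_of_max_le_right hn
  have hlog : 1 ≤ Real.log n := by
    rw [Real.le_log_iff_exp_le (by linarith)]
    linarith [Real.exp_one_lt_d9]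
  gcongr
  exact le_self_pow₀ hlog two_ne_zero
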